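/- For every viscosity ν ≥ 0, every dissipation exponent γ ∈ (0, 3/2), and every α with 1/2 ≤ α < 1/2 + min(1/6, 3/2 − γ), there exist infinitely many nontrivial (not identically zero) stationary weak solutions θ of the surface quasi-geostrophic equation on 𝕋² with zero mean and with Λ^{−1}θ ∈ C^α(𝕋²). -/

import Mathlib

open MeasureTheory Complex Filter
open scoped ENNReal NNReal

noncomputable section

abbrev Z2 := ℤ × ℤ

/-- dot product of an integer frequency with a point of `ℝ²` -/
def dotZ (k : Z2) (x : ℝ × ℝ) : ℝ := (k.1 : ℝ) * x.1 + (k.2 : ℝ) * x.2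

/-- Euclidean norm of an integer frequency -/
def knorm (k : Z2) : ℝ := Real.sqrt ((k.1 : ℝ) ^ 2 + (k.2 : ℝ) ^ 2)

/-- Euclidean norm on `ℝ²` (realized as `ℝ × ℝ`) -/
def e2 (x : ℝ × ℝ) : ℝ := Real.sqrt (x.1 ^ 2 + x.2 ^ 2)

/-- the fundamental domain `[-π, π]²` of the torus -/
def Q2 : Set (ℝ × ℝ) := Set.Icc (-Real.pi, -Real.pi) (Real.pi, Real.pi)

/-- `2π`-periodicity in both variables -/
def Periodic2 (f : ℝ × ℝ → ℂ) : Prop :=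
  ∀ x : ℝ × ℝ, f (x.1 + 2 * Real.pi, x.2) = f x ∧ f (x.1, x.2 + 2 * Real.pi) = f x

def RealValued (f : ℝ × ℝ → ℂ) : Prop := ∀ x, (f x).im = 0

/-- Fourier coefficient `f̂(k) = (2π)⁻² ∫_{𝕋²} f(x) e^{-ik⋅x} dx` -/
def fCoeff (f : ℝ × ℝ → ℂ) (k : Z2) : ℂ :=
  (1 / (2 * Real.pi) ^ 2 : ℂ) * ∫ x in Q2, f x * Complex.exp (-Complex.I * (dotZ k x : ℝ))

/-- Fourier multiplier operator with symbol `m` -/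
def Tmult (m : Z2 → ℂ) (f : ℝ × ℝ → ℂ) : ℝ × ℝ → ℂ :=
  fun x => ∑' k : Z2, m k * fCoeff f k * Complex.exp (Complex.I * (dotZ k x : ℝ))

/-- `Λ^s = (-Δ)^{s/2}`, the multiplier with symbol `|k|^s` (killing `k = 0` for `s ≤ 0`) -/
def Lam (s : ℝ) : (ℝ × ℝ → ℂ) → (ℝ × ℝ → ℂ) :=
  Tmult fun k => if k = 0 then 0 else ((knorm k ^ s : ℝ) : ℂ)

/-- symbol of the Riesz transform `R_j`, `i k_j / |k|` -/
def rieszSym (j : Fin 2) (k : Z2) : ℂ :=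
  if k = 0 then 0
  else Complex.I * ((if j = 0 then (k.1 : ℝ) else (k.2 : ℝ)) : ℂ) / ((knorm k : ℝ) : ℂ)

/-- the Riesz transform `R_j` -/
def Riesz (j : Fin 2) : (ℝ × ℝ → ℂ) → (ℝ × ℝ → ℂ) := Tmult (rieszSym j)

/-- symbol of the modified Riesz-type transforms `R_j^o` of Lemma 2.2 -/
def RoSym (j : Fin 2) (k : Z2) : ℝ :=
  if k = 0 then 0
  else if j = 0 then 25 * ((k.2 : ℝ) ^ 2 - (k.1 : ℝ) ^ 2) / (12 * ((k.1 : ℝ) ^ 2 + (k.2 : ℝ) ^ 2))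
  else 7 * ((k.2 : ℝ) ^ 2 - (k.1 : ℝ) ^ 2) / (12 * ((k.1 : ℝ) ^ 2 + (k.2 : ℝ) ^ 2))
      + 4 * (k.1 : ℝ) * (k.2 : ℝ) / ((k.1 : ℝ) ^ 2 + (k.2 : ℝ) ^ 2)

/-- the Riesz-type transforms `R_j^o` -/
def Ro (j : Fin 2) : (ℝ × ℝ → ℂ) → (ℝ × ℝ → ℂ) := Tmult fun k => ((RoSym j k : ℝ) : ℂ)

/-- symbol of `Δ⁻¹` (mean annihilated) -/
def deltaInvSym (k : Z2) : ℂ := if k = 0 then 0 else -1 / ((knorm k ^ 2 : ℝ) : ℂ)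

/-- directional derivative `(v ⋅ ∇) f` -/
def dirD (v : ℝ × ℝ) (f : ℝ × ℝ → ℂ) : ℝ × ℝ → ℂ := fun x => fderiv ℝ f x v

/-- partial derivative `∂_j f` -/
def pd (j : Fin 2) (f : ℝ × ℝ → ℂ) : ℝ × ℝ → ℂ :=
  dirD (if j = 0 then ((1 : ℝ), (0 : ℝ)) else ((0 : ℝ), (1 : ℝ))) f

/-- sup norm on the torus -/
def supNorm (f : ℝ × ℝ → ℂ) : ℝ := ⨆ x : ℝ × ℝ, ‖f x‖

/-- the `X`-norm `‖q‖_X = ‖q‖_∞ + ‖R₁^o q‖_∞ + ‖R₂^o q‖_∞` -/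
def Xnorm (q : ℝ × ℝ → ℂ) : ℝ := supNorm q + supNorm (Ro 0 q) + supNorm (Ro 1 q)

/-- the vectors `l₁ = (3/5, 4/5)` and `l₂ = (1,0)` -/
def l1 : ℝ × ℝ := (3 / 5, 4 / 5)
def l2 : ℝ × ℝ := (1, 0)

/-- the rotation `l ↦ l^⊥` -/
def perp (l : ℝ × ℝ) : ℝ × ℝ := (-l.2, l.1)

/-- symbol view of frequencies as real vectors -/
def toR (k : Z2) : ℝ × ℝ := ((k.1 : ℝ), (k.2 : ℝ))

/-- the operator `T^{(1)}_{λl}` (where `κ = λl ∈ ℤ²`) -/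
def T1op (κ : Z2) (lam : ℝ) : (ℝ × ℝ → ℂ) → (ℝ × ℝ → ℂ) :=
  Tmult fun k => (((knorm (κ + k) + knorm (κ - k)) / 2 - lam : ℝ) : ℂ)

/-- the operator `T^{(2)}_{λl}` (where `κ = λl ∈ ℤ²`) -/
def T2op (κ : Z2) (l : ℝ × ℝ) : (ℝ × ℝ → ℂ) → (ℝ × ℝ → ℂ) :=
  Tmult fun k =>
    Complex.I * (((knorm (κ + k) - knorm (κ - k)) / 2 - (l.1 * (k.1 : ℝ) + l.2 * (k.2 : ℝ)) : ℝ) : ℂ)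

/-- the functions `a_j = 2 √(r/den) √(C₀ + R_j^o q / r)` -/
def aPerf (q : ℝ × ℝ → ℂ) (r den C₀ : ℝ) (j : Fin 2) : ℝ × ℝ → ℂ :=
  fun x => ((2 * Real.sqrt (r / den) * Real.sqrt (C₀ + (Ro j q x).re / r) : ℝ) : ℂ)

/-- `λ_n = ⌈λ₀^{bⁿ}⌉` -/
def lamSeq (lam0 : ℕ) (b : ℝ) (n : ℕ) : ℕ := ⌈((lam0 : ℝ)) ^ (b ^ n)⌉₊

/-- `r_n = λ_n^{-β}` -/
def rSeq (lam0 : ℕ) (b β : ℝ) (n : ℕ) : ℝ := ((lamSeq lam0 b n : ℝ)) ^ (-β)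

/-- `μ_{n+1} = (λ_n λ_{n+1})^{1/2}` -/
def muSeq (lam0 : ℕ) (b : ℝ) (n : ℕ) : ℝ :=
  Real.sqrt ((lamSeq lam0 b n : ℝ) * (lamSeq lam0 b (n + 1) : ℝ))

/-- smooth Fourier cutoff `P_{≤μ}` associated to a bump `ψ` -/
def Pcut (ψ : ℝ × ℝ → ℝ) (μ : ℝ) : (ℝ × ℝ → ℂ) → (ℝ × ℝ → ℂ) :=
  Tmult fun k => ((ψ ((k.1 : ℝ) / μ, (k.2 : ℝ) / μ) : ℝ) : ℂ)

/-- bilinear multiplier with symbol the Fourier transform of a kernel `K ∈ L¹(ℝ²×ℝ²)` -/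
def mOf (K : (ℝ × ℝ) × (ℝ × ℝ) → ℂ) (ξ η : ℝ × ℝ) : ℂ :=
  ∫ z : (ℝ × ℝ) × (ℝ × ℝ),
    K z * Complex.exp (-Complex.I * ((ξ.1 * z.1.1 + ξ.2 * z.1.2 + η.1 * z.2.1 + η.2 * z.2.2 : ℝ) : ℂ))

/-- the bilinear multiplier operator associated to a kernel `K ∈ L¹(ℝ²×ℝ²)` -/
def Tbil (K : (ℝ × ℝ) × (ℝ × ℝ) → ℂ) (f g : ℝ × ℝ → ℂ) : ℝ × ℝ → ℂ :=
  fun x => ∑' k : Z2,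
    (∑' k' : Z2, mOf K (toR k') (toR (k - k')) * fCoeff f k' * fCoeff g (k - k'))
      * Complex.exp (Complex.I * (dotZ k x : ℝ))

/-- Fourier coefficients of the commutator `[R_j, φ]θ`, computed from those of `φ` and `θ` -/
def commCoeff (j : Fin 2) (φh c : Z2 → ℂ) (k : Z2) : ℂ :=
  ∑' k' : Z2, (rieszSym j k - rieszSym j k') * φh (k - k') * c k'


/-- A mean-zero `θ ∈ Ḣ^{-1/2}(𝕋²)`, given through its Fourier coefficients `c`, is a
stationary weak solution of SQG when, for every real `ψ ∈ C^∞(𝕋²)`,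
`(1/2)∫ (Λ^{-1/2}θ)·Λ^{1/2}([R^⊥,∇ψ]θ) = −ν ∫ (Λ^{-1/2}θ) Λ^{γ+1/2}ψ`; both sides are
expressed through Fourier coefficients via Parseval, with
`[R^⊥,∇ψ]θ = −[R₂,∂₁ψ]θ + [R₁,∂₂ψ]θ`. -/
def IsStatWeakSol (ν γ : ℝ) (c : Z2 → ℂ) : Prop :=
  ∀ ψ : ℝ × ℝ → ℂ, ContDiff ℝ (⊤ : ℕ∞) ψ → Periodic2 ψ → RealValued ψ →
    (1 / 2 : ℂ) * ((2 * Real.pi) ^ 2 : ℝ) *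
      (∑' k : Z2, ((knorm k ^ (-(1 / 2) : ℝ) : ℝ) : ℂ) * c k *
        (starRingEnd ℂ) (((knorm k ^ ((1 / 2) : ℝ) : ℝ) : ℂ) *
          (-(commCoeff 1 (fun m => Complex.I * ((m.1 : ℝ) : ℂ) * fCoeff ψ m) c k)
            + commCoeff 0 (fun m => Complex.I * ((m.2 : ℝ) : ℂ) * fCoeff ψ m) c k)))
    = -(ν : ℂ) * ((2 * Real.pi) ^ 2 : ℝ) *
      (∑' k : Z2, ((knorm k ^ (-(1 / 2) : ℝ) : ℝ) : ℂ) * c k *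
        (starRingEnd ℂ) (((knorm k ^ (γ + 1 / 2) : ℝ) : ℂ) * fCoeff ψ k))

/-!
Write `f = Λ⁻¹θ` and let all Fourier coefficients be real and even. The equation is rewritten as the
vanishing of a residual, namely `Δ⁻¹` of the equation, whose quadratic part has the symbol
`Q(k, m)`. The solution is built by convex integration: given a trigonometric polynomial `f` with
residual `q`, two high-frequency waves of frequency about `λ`, in directions `(3/5, 4/5)` and
`(1, 0)`, with slowly varying amplitudes are added to `f`. The low-frequency part of their
self-interaction cancels `q`: it is given by one Fourier multiplier of order zero for each
direction, and composing these with the operators `R_j^o` and summing gives the identity. Every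
other term of the new residual is small in `ℓ¹`.
Iterating with frequencies `λ_{n+1} ≈ λ_n^b` and corrections of `ℓ¹` size comparable to `λ_n^{-a}`,
for any `a < min (2/3) (2 - γ)`, the limit satisfies `∑ |k|^s |f(k)| < ∞` for all `s < a`.

The bound `|Q(k, m)| ≤ |k|^{1/2} |m|^{1/2}` lets the residual pass to the limit, and an algebraic
identity between `Q` and the symbol of the commutator `[R^⊥, ∇ψ]` turns the vanishing of the
residual into the weak formulation. Starting the iteration at arbitrarily high frequencies produces
infinitely many solutions.
-/

/-! ### Plane geometry of frequencies -/

/-- The determinant `k × m = k₁ m₂ - k₂ m₁` of two frequencies, for which the transport term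
`∇^⊥ f ⋅ ∇ g` has symbol `-(k × m)`. -/
def cross (k m : Z2) : ℝ := (k.1 : ℝ) * m.2 - (k.2 : ℝ) * m.1

lemma knorm_eq_norm (k : Z2) : knorm k = ‖((k.1 : ℝ) : ℂ) + ((k.2 : ℝ) : ℂ) * I‖ :=
  (Complex.norm_add_mul_I _ _).symm

lemma knorm_nonneg (k : Z2) : 0 ≤ knorm k := Real.sqrt_nonneg _

lemma knorm_sq (k : Z2) : knorm k ^ 2 = (k.1 : ℝ) ^ 2 + (k.2 : ℝ) ^ 2 :=
  Real.sq_sqrt (by positivity)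

@[simp] lemma knorm_zero : knorm 0 = 0 := by simp [knorm]

@[simp] lemma knorm_neg (k : Z2) : knorm (-k) = knorm k := by simp [knorm]

lemma knorm_zsmul (c : ℤ) (k : Z2) : knorm (c • k) = |(c : ℝ)| * knorm k := by
  rw [knorm, knorm, ← Real.sqrt_sq_eq_abs, ← Real.sqrt_mul (sq_nonneg _)]
  simp only [Prod.smul_fst, Prod.smul_snd, smul_eq_mul, Int.cast_mul]
  ring_nf

lemma knorm_add_le (k m : Z2) : knorm (k + m) ≤ knorm k + knorm m := by
  simp only [knorm_eq_norm]
  refine le_trans (le_of_eq ?_) (norm_add_le _ _)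
  congr 1
  push_cast [Prod.fst_add, Prod.snd_add]
  ring

lemma knorm_sub_le (k m : Z2) : knorm (k - m) ≤ knorm k + knorm m := by
  simpa [sub_eq_add_neg] using knorm_add_le k (-m)

lemma abs_knorm_sub_knorm_le (k m : Z2) : |knorm k - knorm m| ≤ knorm (k + m) := by
  have hk := knorm_sub_le (k + m) m
  have hm := knorm_sub_le (k + m) k
  rw [add_sub_cancel_right] at hk
  rw [add_sub_cancel_left] at hm
  exact abs_sub_le_iff.2 ⟨by linarith, by linarith⟩

lemma abs_knorm_add_sub_le (k m : Z2) : |knorm (k + m) - knorm k| ≤ knorm m := by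
  simpa using abs_knorm_sub_knorm_le (k + m) (-k)

lemma one_le_knorm {k : Z2} (hk : k ≠ 0) : 1 ≤ knorm k := by
  have hsq : (1 : ℤ) ≤ k.1 ^ 2 + k.2 ^ 2 := by
    by_contra! h
    have h₁ : k.1 ^ 2 = 0 := by nlinarith [sq_nonneg k.1, sq_nonneg k.2]
    have h₂ : k.2 ^ 2 = 0 := by nlinarith [sq_nonneg k.1, sq_nonneg k.2]
    exact hk (Prod.ext (pow_eq_zero_iff two_ne_zero |>.1 h₁) (pow_eq_zero_iff two_ne_zero |>.1 h₂))
  rw [knorm, Real.one_le_sqrt]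
  exact_mod_cast hsq

lemma knorm_pos {k : Z2} (hk : k ≠ 0) : 0 < knorm k := one_pos.trans_le (one_le_knorm hk)

lemma abs_cross_le (k m : Z2) : |cross k m| ≤ knorm k * knorm m := by
  apply abs_le_of_sq_le_sq _ (mul_nonneg (knorm_nonneg _) (knorm_nonneg _))
  rw [mul_pow, knorm_sq, knorm_sq, cross]
  linarith [sq_nonneg ((k.1 : ℝ) * m.1 + (k.2 : ℝ) * m.2)]

lemma abs_dotZ_toR_le (k m : Z2) : |dotZ k (toR m)| ≤ knorm k * knorm m := by
  apply abs_le_of_sq_le_sq _ (mul_nonneg (knorm_nonneg _) (knorm_nonneg _))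
  rw [mul_pow, knorm_sq, knorm_sq, dotZ, toR]
  linarith [sq_nonneg ((k.1 : ℝ) * m.2 - (k.2 : ℝ) * m.1)]

lemma cross_self_add (k m : Z2) : cross k (k + m) = cross k m := by
  simp only [cross, Prod.fst_add, Prod.snd_add, Int.cast_add]
  ring

lemma abs_cross_le_knorm_mul_knorm_add (k m : Z2) : |cross k m| ≤ knorm k * knorm (k + m) := by
  rw [← cross_self_add]
  exact abs_cross_le _ _

lemma knorm_sub_knorm_mul_add (k m : Z2) :
    (knorm k - knorm m) * (knorm k + knorm m) = dotZ (k - m) (toR (k + m)) := by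
  rw [mul_comm, ← sq_sub_sq, knorm_sq, knorm_sq]
  simp only [dotZ, toR, Prod.fst_add, Prod.snd_add, Prod.fst_sub, Prod.snd_sub, Int.cast_add,
    Int.cast_sub]
  ring

/-! ### The symbol of the nonlinearity -/

/-- The symmetrised symbol of the quadratic form `f ↦ Δ⁻¹(∇^⊥ f ⋅ ∇ Λ f)`, so that for
`f = Λ⁻¹θ` the SQG equation reads `∑_{k + m = n} Q(k, m) f̂(k) f̂(m) + ν |n|^{γ-1} f̂(n) = 0`. -/
def sqgSymbol (k m : Z2) : ℝ := cross k m * (knorm k - knorm m) / (2 * knorm (k + m) ^ 2)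

lemma sqgSymbol_comm (k m : Z2) : sqgSymbol k m = sqgSymbol m k := by
  rw [sqgSymbol, sqgSymbol, add_comm m k, cross, cross]
  ring

lemma sqgSymbol_neg_neg (k m : Z2) : sqgSymbol (-k) (-m) = sqgSymbol k m := by
  simp only [sqgSymbol, cross, ← neg_add, knorm_neg, Prod.fst_neg, Prod.snd_neg, Int.cast_neg,
    neg_mul_neg]

lemma sqgSymbol_of_add_eq_zero {k m : Z2} (h : k + m = 0) : sqgSymbol k m = 0 := by
  simp [sqgSymbol, h]

lemma abs_sqgSymbol_le_left (k m : Z2) : |sqgSymbol k m| ≤ knorm k / 2 := by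
  by_cases h : k + m = 0
  · rw [sqgSymbol_of_add_eq_zero h, abs_zero]
    linarith [knorm_nonneg k]
  have hpos := knorm_pos h
  rw [sqgSymbol, abs_div, abs_of_pos (by positivity : 0 < 2 * knorm (k + m) ^ 2),
    div_le_iff₀ (by positivity), abs_mul]
  calc |cross k m| * |knorm k - knorm m|
      ≤ (knorm k * knorm (k + m)) * knorm (k + m) :=
        mul_le_mul (abs_cross_le_knorm_mul_knorm_add k m) (abs_knorm_sub_knorm_le k m)
          (abs_nonneg _) (mul_nonneg (knorm_nonneg _) hpos.le)
    _ = knorm k / 2 * (2 * knorm (k + m) ^ 2) := by ring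

lemma abs_sqgSymbol_le_right (k m : Z2) : |sqgSymbol k m| ≤ knorm m / 2 := by
  rw [sqgSymbol_comm]
  exact abs_sqgSymbol_le_left m k

lemma abs_sqgSymbol_le_sqrt_mul_sqrt (k m : Z2) : |sqgSymbol k m| ≤ √(knorm k) * √(knorm m) := by
  rw [← Real.sqrt_mul (knorm_nonneg k)]
  apply Real.le_sqrt_of_sq_le
  have h := mul_le_mul (abs_sqgSymbol_le_left k m) (abs_sqgSymbol_le_right k m) (abs_nonneg _)
    (by linarith [knorm_nonneg k])
  nlinarith [mul_nonneg (knorm_nonneg k) (knorm_nonneg m)]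

/-- Two waves of nearly equal lengths almost cancel: their lengths cannot differ by more than
`2μ`. -/
lemma abs_sqgSymbol_le_of_annulus {k m : Z2} {lam μ : ℝ} (hk : |knorm k - lam| ≤ μ)
    (hm : |knorm m - lam| ≤ μ) (hμ : μ ≤ lam) (hlam : 0 < lam) (hkm : lam / 2 ≤ knorm (k + m)) :
    |sqgSymbol k m| ≤ 4 * μ := by
  have hpos : 0 < knorm (k + m) := by linarith
  have hdiff : |knorm k - knorm m| ≤ 2 * μ := by
    rw [abs_le] at *
    constructor <;> linarith
  have hcross : |cross k m| ≤ 4 * knorm (k + m) * knorm (k + m) :=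
    (abs_cross_le_knorm_mul_knorm_add k m).trans
      (mul_le_mul_of_nonneg_right (by linarith [(abs_le.1 hk).2]) hpos.le)
  rw [sqgSymbol, abs_div, abs_of_pos (by positivity : 0 < 2 * knorm (k + m) ^ 2),
    div_le_iff₀ (by positivity), abs_mul]
  calc |cross k m| * |knorm k - knorm m|
      ≤ (4 * knorm (k + m) * knorm (k + m)) * (2 * μ) :=
        mul_le_mul hcross hdiff (abs_nonneg _) (by positivity)
    _ = 4 * μ * (2 * knorm (k + m) ^ 2) := by ring

/-- The degree-zero symbol `(l × m)(l ⋅ m) / |m|²` with `l = κ / |κ|`, to which the symbol of the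
nonlinearity reduces when a wave `κ` interacts with `-κ`. -/
def waveSymbol (κ m : Z2) : ℝ := cross κ m * dotZ κ (toR m) / (knorm κ ^ 2 * knorm m ^ 2)

lemma abs_waveSymbol_le_one (κ m : Z2) : |waveSymbol κ m| ≤ 1 := by
  rw [waveSymbol, abs_div, abs_mul, abs_of_nonneg (by positivity : 0 ≤ knorm κ ^ 2 * knorm m ^ 2)]
  refine div_le_one_of_le₀ ?_ (by positivity)
  calc |cross κ m| * |dotZ κ (toR m)| ≤ (knorm κ * knorm m) * (knorm κ * knorm m) :=
        mul_le_mul (abs_cross_le κ m) (abs_dotZ_toR_le κ m) (abs_nonneg _)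
          (mul_nonneg (knorm_nonneg _) (knorm_nonneg _))
    _ = knorm κ ^ 2 * knorm m ^ 2 := by ring

lemma waveSymbol_zsmul {c : ℤ} (hc : c ≠ 0) (κ m : Z2) :
    waveSymbol (c • κ) m = waveSymbol κ m := by
  have hc' : (c : ℝ) ^ 2 ≠ 0 := by positivity
  rw [waveSymbol, waveSymbol, ← mul_div_mul_left (cross κ m * _) _ hc', knorm_zsmul, mul_pow,
    sq_abs]
  simp only [cross, dotZ, Prod.smul_fst, Prod.smul_snd, smul_eq_mul, Int.cast_mul]
  ring

section LowFrequencyOutput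

variable {κ p p' : Z2} {μ : ℝ}

/-- This is the expansion `|κ + p| - |-κ + p'| ≈ (κ / |κ|) ⋅ (p + p')`. -/
lemma abs_knorm_sub_mul_sub_dotZ_le (hκ : κ ≠ 0) (hp : knorm p ≤ μ) (hp' : knorm p' ≤ μ)
    (hμ : 2 * μ ≤ knorm κ) :
    |(knorm (κ + p) - knorm (-κ + p')) * knorm κ - dotZ κ (toR (p + p'))|
      ≤ 4 * μ * knorm (p + p') := by
  have hκ0 := knorm_pos hκ
  have hk := abs_le.1 ((abs_knorm_add_sub_le κ p).trans hp)
  have hk' := abs_le.1 ((abs_knorm_add_sub_le (-κ) p').trans hp')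
  rw [knorm_neg] at hk'
  set k := κ + p
  set k' := -κ + p'
  set m := p + p'
  have hS : knorm κ ≤ knorm k + knorm k' := by linarith
  have hdot : (knorm k - knorm k') * (knorm k + knorm k')
      = 2 * dotZ κ (toR m) + dotZ (p - p') (toR m) := by
    rw [knorm_sub_knorm_mul_add, show k + k' = m by simp only [k, k', m]; abel]
    simp only [k, k', dotZ, Prod.fst_add, Prod.snd_add, Prod.fst_neg, Prod.snd_neg, Prod.fst_sub,
      Prod.snd_sub, Int.cast_add, Int.cast_neg, Int.cast_sub]
    ring
  have hsplit : ((knorm k - knorm k') * knorm κ - dotZ κ (toR m)) * (knorm k + knorm k')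
      = dotZ (p - p') (toR m) * knorm κ
        + dotZ κ (toR m) * (2 * knorm κ - (knorm k + knorm k')) := by
    linear_combination knorm κ * hdot
  have hm := knorm_nonneg m
  have h₁ : |dotZ (p - p') (toR m) * knorm κ| ≤ 2 * μ * knorm m * knorm κ := by
    rw [abs_mul, abs_of_pos hκ0]
    have hsub : knorm (p - p') ≤ 2 * μ := by linarith [knorm_sub_le p p']
    exact mul_le_mul_of_nonneg_right ((abs_dotZ_toR_le _ m).trans (by gcongr)) hκ0.le
  have h₂ : |dotZ κ (toR m) * (2 * knorm κ - (knorm k + knorm k'))|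
      ≤ knorm κ * knorm m * (2 * μ) := by
    rw [abs_mul]
    exact mul_le_mul (abs_dotZ_toR_le κ m) (abs_le.2 ⟨by linarith, by linarith⟩) (abs_nonneg _)
      (by positivity)
  have h₁₂ := (abs_add_le _ _).trans (add_le_add h₁ h₂)
  rw [← hsplit, abs_mul, abs_of_pos (hκ0.trans_le hS)] at h₁₂
  refine le_of_mul_le_mul_right ?_ (hκ0.trans_le hS)
  calc |(knorm k - knorm k') * knorm κ - dotZ κ (toR m)| * (knorm k + knorm k')
      ≤ 2 * μ * knorm m * knorm κ + knorm κ * knorm m * (2 * μ) := h₁₂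
    _ = 4 * μ * knorm m * knorm κ := by ring
    _ ≤ 4 * μ * knorm m * (knorm k + knorm k') := by
        have hμ0 := (knorm_nonneg p).trans hp
        gcongr

lemma sqgSymbol_sub_waveSymbol_eq (hκ : κ ≠ 0) (hm : p + p' ≠ 0) :
    sqgSymbol (κ + p) (-κ + p') - knorm κ / 2 * waveSymbol κ (p + p')
      = (cross p (p + p') * (knorm (κ + p) - knorm (-κ + p'))
        + cross κ (p + p') / knorm κ
          * ((knorm (κ + p) - knorm (-κ + p')) * knorm κ - dotZ κ (toR (p + p'))))
        / (2 * knorm (p + p') ^ 2) := by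
  have hκ0 := knorm_pos hκ
  have hm0 := knorm_pos hm
  have hcross : cross (κ + p) (-κ + p') = cross κ (p + p') + cross p (p + p') := by
    simp only [cross, Prod.fst_add, Prod.snd_add, Prod.fst_neg, Prod.snd_neg, Int.cast_add,
      Int.cast_neg]
    ring
  rw [sqgSymbol, waveSymbol, show κ + p + (-κ + p') = p + p' by abel, hcross]
  field_simp
  ring

lemma abs_sqgSymbol_sub_waveSymbol_le (hκ : κ ≠ 0) (hp : knorm p ≤ μ) (hp' : knorm p' ≤ μ)
    (hμ : 2 * μ ≤ knorm κ) :
    |sqgSymbol (κ + p) (-κ + p') - knorm κ / 2 * waveSymbol κ (p + p')| ≤ 3 * μ := by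
  have hμ0 : 0 ≤ μ := (knorm_nonneg p).trans hp
  have hsum : κ + p + (-κ + p') = p + p' := by abel
  by_cases hm : p + p' = 0
  · rw [sqgSymbol_of_add_eq_zero (hsum.trans hm), hm]
    simpa [waveSymbol] using hμ0
  have hκ0 := knorm_pos hκ
  have hm0 := knorm_pos hm
  have h₁ : |cross p (p + p') * (knorm (κ + p) - knorm (-κ + p'))|
      ≤ μ * knorm (p + p') * knorm (p + p') := by
    rw [abs_mul]
    refine mul_le_mul ((abs_cross_le p _).trans (by gcongr)) ?_ (abs_nonneg _) (by positivity)
    exact (abs_knorm_sub_knorm_le _ _).trans_eq (by rw [hsum])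
  have h₂ : |cross κ (p + p') / knorm κ
      * ((knorm (κ + p) - knorm (-κ + p')) * knorm κ - dotZ κ (toR (p + p')))|
      ≤ knorm (p + p') * (4 * μ * knorm (p + p')) := by
    rw [abs_mul]
    refine mul_le_mul ?_ (abs_knorm_sub_mul_sub_dotZ_le hκ hp hp' hμ) (abs_nonneg _) hm0.le
    rw [abs_div, abs_of_pos hκ0, div_le_iff₀ hκ0, mul_comm]
    exact abs_cross_le κ _
  rw [sqgSymbol_sub_waveSymbol_eq hκ hm, abs_div,
    abs_of_pos (by positivity : 0 < 2 * knorm (p + p') ^ 2), div_le_iff₀ (by positivity)]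
  linarith [(abs_add_le _ _).trans (add_le_add h₁ h₂), mul_nonneg hμ0 (sq_nonneg (knorm (p + p')))]

end LowFrequencyOutput

/-! ### Finite Fourier series -/

section FiniteSeries

variable {ι : Type*}

/-- The Wiener norm `∑ |f k|` of a finite Fourier series. -/
def l1Norm : Seminorm ℝ (ι →₀ ℝ) :=
  Seminorm.of (fun f => f.sum fun _ a => |a|)
    (fun f g => by
      classical
      rw [Finsupp.sum_of_support_subset (f + g) Finsupp.support_add _ fun _ _ => abs_zero,
        Finsupp.sum_of_support_subset f Finset.subset_union_left _ fun _ _ => abs_zero,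
        Finsupp.sum_of_support_subset g Finset.subset_union_right _ fun _ _ => abs_zero,
        ← Finset.sum_add_distrib]
      exact Finset.sum_le_sum fun k _ => abs_add_le (f k) (g k))
    (fun a f => by
      rw [Finsupp.sum_of_support_subset _ Finsupp.support_smul _ fun _ _ => abs_zero, Finsupp.sum,
        Finset.mul_sum]
      simp [abs_mul])

lemma l1Norm_eq_sum_support (f : ι →₀ ℝ) : l1Norm f = ∑ k ∈ f.support, |f k| := rfl

lemma l1Norm_eq_sum {f : ι →₀ ℝ} {s : Finset ι} (hs : f.support ⊆ s) :
    l1Norm f = ∑ k ∈ s, |f k| :=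
  Finsupp.sum_of_support_subset f hs _ fun _ _ => abs_zero

@[simp] lemma l1Norm_single (k : ι) (a : ℝ) : l1Norm (Finsupp.single k a) = |a| :=
  Finsupp.sum_single_index abs_zero

lemma l1Norm_sum_le {β : Type*} (s : Finset β) (F : β → ι →₀ ℝ) :
    l1Norm (∑ i ∈ s, F i) ≤ ∑ i ∈ s, l1Norm (F i) :=
  Finset.le_sum_of_subadditive _ (map_zero l1Norm).le (map_add_le_add l1Norm) s F

lemma l1Norm_sum_le_card_mul {β : Type*} {s : Finset β} {F : β → ι →₀ ℝ} {M : ℝ}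
    (h : ∀ i ∈ s, l1Norm (F i) ≤ M) : l1Norm (∑ i ∈ s, F i) ≤ s.card * M := by
  rw [← nsmul_eq_mul]
  exact (l1Norm_sum_le s F).trans (Finset.sum_le_card_nsmul _ _ _ h)

lemma abs_apply_le_l1Norm (f : ι →₀ ℝ) (k : ι) : |f k| ≤ l1Norm f := by
  classical
  rw [l1Norm_eq_sum (Finset.subset_insert k f.support)]
  exact Finset.single_le_sum (f := fun k => |f k|) (fun _ _ => abs_nonneg _)
    (Finset.mem_insert_self k _)

/-- The Fourier multiplier with symbol `u`. -/
def fourierMul (u : ι → ℝ) : (ι →₀ ℝ) →ₗ[ℝ] ι →₀ ℝ :=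
  Finsupp.linearCombination ℝ fun k => Finsupp.single k (u k)

@[simp] lemma fourierMul_single (u : ι → ℝ) (k : ι) (a : ℝ) :
    fourierMul u (Finsupp.single k a) = Finsupp.single k (a * u k) := by
  simp [fourierMul]

@[simp] lemma fourierMul_apply (u : ι → ℝ) (f : ι →₀ ℝ) (k : ι) :
    fourierMul u f k = u k * f k := by
  classical
  induction f using Finsupp.induction_linear with
  | zero => simp
  | add f g hf hg => simp [hf, hg, mul_add]
  | single m a =>
    rw [fourierMul_single, Finsupp.single_apply, Finsupp.single_apply]
    split_ifs with h
    · rw [h, mul_comm]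
    · rw [mul_zero]

lemma l1Norm_fourierMul (u : ι → ℝ) (f : ι →₀ ℝ) :
    l1Norm (fourierMul u f) = ∑ k ∈ f.support, |u k| * |f k| := by
  rw [l1Norm_eq_sum (s := f.support)]
  · simp [abs_mul]
  · intro k hk
    simp only [Finsupp.mem_support_iff, fourierMul_apply] at hk ⊢
    exact right_ne_zero_of_mul hk

lemma l1Norm_fourierMul_le {u : ι → ℝ} {R : ℝ} {f : ι →₀ ℝ} (h : ∀ k, f k ≠ 0 → |u k| ≤ R) :
    l1Norm (fourierMul u f) ≤ R * l1Norm f := by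
  rw [l1Norm_fourierMul, l1Norm_eq_sum_support, Finset.mul_sum]
  exact Finset.sum_le_sum fun k hk =>
    mul_le_mul_of_nonneg_right (h k (Finsupp.mem_support_iff.1 hk)) (abs_nonneg _)

section AddCommMonoid

variable [AddCommMonoid ι]

/-- The bilinear Fourier multiplier with symbol `S`. -/
def bilinMul (S : ι → ι → ℝ) : (ι →₀ ℝ) →ₗ[ℝ] (ι →₀ ℝ) →ₗ[ℝ] ι →₀ ℝ :=
  Finsupp.linearCombination ℝ fun k => Finsupp.linearCombination ℝ fun m =>
    Finsupp.single (k + m) (S k m)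

lemma bilinMul_eq_sum (S : ι → ι → ℝ) (f g : ι →₀ ℝ) :
    bilinMul S f g
      = ∑ k ∈ f.support, ∑ m ∈ g.support, Finsupp.single (k + m) (S k m * f k * g m) := by
  simp only [bilinMul, Finsupp.linearCombination_apply, Finsupp.sum, LinearMap.sum_apply,
    LinearMap.smul_apply, Finset.smul_sum, Finsupp.smul_single, smul_eq_mul]
  refine Finset.sum_congr rfl fun k _ => Finset.sum_congr rfl fun m _ => ?_
  rw [mul_comm (g m), ← mul_assoc, mul_comm (f k)]

@[simp] lemma bilinMul_single_single (S : ι → ι → ℝ) (k m : ι) (a b : ℝ) :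
    bilinMul S (Finsupp.single k a) (Finsupp.single m b)
      = Finsupp.single (k + m) (a * (b * S k m)) := by
  simp only [bilinMul, Finsupp.linearCombination_single, LinearMap.smul_apply,
    Finsupp.smul_single, smul_eq_mul]

lemma l1Norm_bilinMul_le_sum (S : ι → ι → ℝ) (f g : ι →₀ ℝ) :
    l1Norm (bilinMul S f g) ≤ ∑ k ∈ f.support, ∑ m ∈ g.support, |S k m| * |f k| * |g m| := by
  rw [bilinMul_eq_sum]
  refine (l1Norm_sum_le _ _).trans (Finset.sum_le_sum fun k _ => ?_)
  refine (l1Norm_sum_le _ _).trans_eq (Finset.sum_congr rfl fun m _ => ?_)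
  rw [l1Norm_single, abs_mul, abs_mul]

lemma l1Norm_bilinMul_le_mul {S : ι → ι → ℝ} {u v : ι → ℝ} {f g : ι →₀ ℝ}
    (h : ∀ k m, |S k m| ≤ u k * v m) :
    l1Norm (bilinMul S f g) ≤ l1Norm (fourierMul u f) * l1Norm (fourierMul v g) := by
  rw [l1Norm_fourierMul, l1Norm_fourierMul, Finset.sum_mul_sum]
  refine (l1Norm_bilinMul_le_sum S f g).trans
    (Finset.sum_le_sum fun k _ => Finset.sum_le_sum fun m _ => ?_)
  calc |S k m| * |f k| * |g m| ≤ (|u k| * |v m|) * |f k| * |g m| := by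
        gcongr
        exact (h k m).trans ((le_abs_self _).trans (abs_mul _ _).le)
    _ = |u k| * |f k| * (|v m| * |g m|) := by ring

lemma l1Norm_bilinMul_le {S : ι → ι → ℝ} {M : ℝ} {f g : ι →₀ ℝ}
    (h : ∀ k m, f k ≠ 0 → g m ≠ 0 → |S k m| ≤ M) :
    l1Norm (bilinMul S f g) ≤ M * l1Norm f * l1Norm g := by
  refine (l1Norm_bilinMul_le_sum S f g).trans ?_
  rw [mul_assoc, l1Norm_eq_sum_support f, l1Norm_eq_sum_support g, Finset.sum_mul_sum,
    Finset.mul_sum]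
  refine Finset.sum_le_sum fun k hk => ?_
  rw [Finset.mul_sum]
  refine Finset.sum_le_sum fun m hm => ?_
  rw [mul_assoc]
  gcongr
  exact h k m (Finsupp.mem_support_iff.1 hk) (Finsupp.mem_support_iff.1 hm)

lemma bilinMul_comm {S : ι → ι → ℝ} (hS : ∀ k m, S k m = S m k) (f g : ι →₀ ℝ) :
    bilinMul S f g = bilinMul S g f := by
  rw [bilinMul_eq_sum, bilinMul_eq_sum, Finset.sum_comm]
  refine Finset.sum_congr rfl fun m _ => Finset.sum_congr rfl fun k _ => ?_
  rw [hS, add_comm, mul_right_comm]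

lemma bilinMul_sub_symbol (S S' : ι → ι → ℝ) (f g : ι →₀ ℝ) :
    bilinMul (fun k m => S k m - S' k m) f g = bilinMul S f g - bilinMul S' f g := by
  simp only [bilinMul_eq_sum, ← Finset.sum_sub_distrib, ← Finsupp.single_sub, sub_mul]

lemma bilinMul_symbol_add (u : ι → ℝ) (f g : ι →₀ ℝ) :
    bilinMul (fun k m => u (k + m)) f g = fourierMul u (bilinMul (fun _ _ => 1) f g) := by
  suffices h : bilinMul (fun k m => u (k + m))
      = (bilinMul fun _ _ => 1).compr₂ (fourierMul u) by rw [h, LinearMap.compr₂_apply]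
  ext k m : 4
  simp

lemma bilinMul_one_single_zero (f : ι →₀ ℝ) :
    bilinMul (fun _ _ => 1) f (Finsupp.single 0 1) = f := by
  induction f using Finsupp.induction_linear with
  | zero => simp
  | add f g hf hg => rw [map_add, LinearMap.add_apply, hf, hg]
  | single k a => simp

lemma l1Norm_bilinMul_one_le (f g : ι →₀ ℝ) :
    l1Norm (bilinMul (fun _ _ => 1) f g) ≤ l1Norm f * l1Norm g := by
  simpa using l1Norm_bilinMul_le (S := fun _ _ => 1) (M := 1) (f := f) (g := g) (by simp)

/-- Translation of frequencies by `κ`, that is multiplication by the wave `e^{iκ⋅x}`. -/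
def freqShift (κ : ι) : (ι →₀ ℝ) →ₗ[ℝ] ι →₀ ℝ := Finsupp.lmapDomain ℝ ℝ (κ + ·)

@[simp] lemma freqShift_single (κ k : ι) (a : ℝ) :
    freqShift κ (Finsupp.single k a) = Finsupp.single (κ + k) a :=
  Finsupp.mapDomain_single

lemma freqShift_zero (f : ι →₀ ℝ) : freqShift 0 f = f := by
  simp only [freqShift, zero_add, Finsupp.lmapDomain_apply]
  exact Finsupp.mapDomain_id

lemma bilinMul_freqShift (S : ι → ι → ℝ) (κ κ' : ι) (f g : ι →₀ ℝ) :
    bilinMul S (freqShift κ f) (freqShift κ' g)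
      = freqShift (κ + κ') (bilinMul (fun p p' => S (κ + p) (κ' + p')) f g) := by
  suffices h : (bilinMul S).compl₁₂ (freqShift κ) (freqShift κ')
      = (bilinMul fun p p' => S (κ + p) (κ' + p')).compr₂ (freqShift (κ + κ')) from
    congr($h f g)
  ext k m : 4
  simp [add_add_add_comm]

end AddCommMonoid

section AddCommGroup

variable [AddCommGroup ι]

lemma freqShift_apply (κ : ι) (f : ι →₀ ℝ) (k : ι) : freqShift κ f k = f (k - κ) := by
  simpa [freqShift] using Finsupp.mapDomain_apply (add_right_injective κ) f (k - κ)

lemma l1Norm_freqShift (κ : ι) (f : ι →₀ ℝ) : l1Norm (freqShift κ f) = l1Norm f :=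
  Finsupp.sum_mapDomain_index_inj (add_right_injective κ)

lemma bilinMul_apply (S : ι → ι → ℝ) (f g : ι →₀ ℝ) (m : ι) :
    bilinMul S f g m = ∑ k ∈ f.support, S k (m - k) * f k * g (m - k) := by
  classical
  simp only [bilinMul_eq_sum, Finsupp.finsetSum_apply, Finsupp.single_apply,
    ← eq_sub_iff_add_eq']
  refine Finset.sum_congr rfl fun k _ => ?_
  rw [Finset.sum_ite_eq', ite_eq_left_iff]
  intro h
  rw [Finsupp.notMem_support_iff.1 h, mul_zero]

lemma bilinMul_apply_tsum (S : ι → ι → ℝ) (f g : ι →₀ ℝ) (m : ι) :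
    bilinMul S f g m = ∑' k, S k (m - k) * f k * g (m - k) := by
  rw [bilinMul_apply, tsum_eq_sum]
  intro k hk
  rw [Finsupp.notMem_support_iff.1 hk, mul_zero, zero_mul]

lemma exists_ne_zero_of_bilinMul_apply_ne_zero {S : ι → ι → ℝ} {f g : ι →₀ ℝ} {m : ι}
    (h : bilinMul S f g m ≠ 0) : ∃ k, f k ≠ 0 ∧ g (m - k) ≠ 0 := by
  rw [bilinMul_apply] at h
  obtain ⟨k, -, hk⟩ := Finset.exists_ne_zero_of_sum_ne_zero h
  exact ⟨k, right_ne_zero_of_mul (left_ne_zero_of_mul hk), right_ne_zero_of_mul hk⟩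

/-- The even series, which represent real functions when their coefficients are real. -/
def evenSeries (ι : Type*) [AddCommGroup ι] : Submodule ℝ (ι →₀ ℝ) where
  carrier := {f | ∀ k, f (-k) = f k}
  add_mem' hf hg k := by rw [Finsupp.add_apply, hf, hg, Finsupp.add_apply]
  zero_mem' _ := rfl
  smul_mem' a f hf k := by rw [Finsupp.smul_apply, hf, Finsupp.smul_apply]

lemma single_zero_mem_evenSeries (a : ℝ) : Finsupp.single 0 a ∈ evenSeries ι := by
  classical
  intro k
  simp [Finsupp.single_apply, eq_comm]

lemma fourierMul_mem_evenSeries {u : ι → ℝ} (hu : ∀ k, u (-k) = u k) {f : ι →₀ ℝ}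
    (hf : f ∈ evenSeries ι) : fourierMul u f ∈ evenSeries ι := fun k => by
  rw [fourierMul_apply, fourierMul_apply, hu, hf]

lemma bilinMul_mem_evenSeries {S : ι → ι → ℝ} (hS : ∀ k m, S (-k) (-m) = S k m)
    {f g : ι →₀ ℝ} (hf : f ∈ evenSeries ι) (hg : g ∈ evenSeries ι) :
    bilinMul S f g ∈ evenSeries ι := fun m => by
  rw [bilinMul_apply_tsum, bilinMul_apply_tsum, ← (Equiv.neg ι).tsum_eq]
  refine tsum_congr fun k => ?_
  rw [Equiv.neg_apply, show -m - -k = -(m - k) by abel, hS, hf, hg]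

end AddCommGroup

end FiniteSeries

/-- The series with frequencies in the disc of radius `R`. -/
def discSeries (R : ℝ) : Submodule ℝ (Z2 →₀ ℝ) := Finsupp.supported ℝ ℝ {k | knorm k ≤ R}

lemma mem_discSeries {R : ℝ} {f : Z2 →₀ ℝ} : f ∈ discSeries R ↔ ∀ k, f k ≠ 0 → knorm k ≤ R := by
  simp [discSeries, Finsupp.mem_supported, Set.subset_def]

lemma discSeries_mono {R R' : ℝ} (h : R ≤ R') : discSeries R ≤ discSeries R' :=
  Finsupp.supported_mono fun _ hk => le_trans hk h

lemma single_zero_mem_discSeries {R : ℝ} (hR : 0 ≤ R) (a : ℝ) :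
    Finsupp.single 0 a ∈ discSeries R :=
  Finsupp.single_mem_supported ℝ a (by simpa using hR)

lemma fourierMul_mem_discSeries {R : ℝ} {f : Z2 →₀ ℝ} (u : Z2 → ℝ) (hf : f ∈ discSeries R) :
    fourierMul u f ∈ discSeries R :=
  mem_discSeries.2 fun k hk =>
    mem_discSeries.1 hf k (right_ne_zero_of_mul (fourierMul_apply u f k ▸ hk))

lemma bilinMul_mem_discSeries {R R' : ℝ} {f g : Z2 →₀ ℝ} (S : Z2 → Z2 → ℝ)
    (hf : f ∈ discSeries R) (hg : g ∈ discSeries R') :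
    bilinMul S f g ∈ discSeries (R + R') := by
  refine mem_discSeries.2 fun m hm => ?_
  obtain ⟨k, hfk, hgk⟩ := exists_ne_zero_of_bilinMul_apply_ne_zero hm
  calc knorm m = knorm (k + (m - k)) := by rw [add_sub_cancel]
    _ ≤ knorm k + knorm (m - k) := knorm_add_le _ _
    _ ≤ R + R' := add_le_add (mem_discSeries.1 hf _ hfk) (mem_discSeries.1 hg _ hgk)

/-! ### Approximate square roots -/

section ApproxSqrt

/-- The defect `1 + x - s²` of `s` as a square root of `1 + x`. -/
def sqrtDefect {ι : Type*} [AddCommMonoid ι] (x s : ι →₀ ℝ) : ι →₀ ℝ :=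
  Finsupp.single 0 1 + x - bilinMul (fun _ _ => 1) s s

/-- The iteration `s ↦ s + (1 + x - s²) / 2`, `s₀ = 1`, for the square root of `1 + x`. It keeps
finite Fourier series finite, which the exact square root does not. -/
def approxSqrt {ι : Type*} [AddCommMonoid ι] (x : ι →₀ ℝ) : ℕ → ι →₀ ℝ
  | 0 => Finsupp.single 0 1
  | K + 1 => approxSqrt x K + (1 / 2 : ℝ) • sqrtDefect x (approxSqrt x K)

lemma approxSqrt_mem_evenSeries {ι : Type*} [AddCommGroup ι] {x : ι →₀ ℝ}
    (hx : x ∈ evenSeries ι) : ∀ K, approxSqrt x K ∈ evenSeries ι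
  | 0 => single_zero_mem_evenSeries 1
  | K + 1 =>
    have hs := approxSqrt_mem_evenSeries hx K
    add_mem hs (Submodule.smul_mem _ _ (sub_mem (add_mem (single_zero_mem_evenSeries 1) hx)
      (bilinMul_mem_evenSeries (by simp) hs hs)))

lemma approxSqrt_mem_discSeries {x : Z2 →₀ ℝ} {R : ℝ} (hR : 0 ≤ R) (hx : x ∈ discSeries R) :
    ∀ K, approxSqrt x K ∈ discSeries (2 ^ K * R)
  | 0 => single_zero_mem_discSeries (by simpa using hR) 1
  | K + 1 => by
    have hs := approxSqrt_mem_discSeries hR hx K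
    have hR1 : R ≤ 2 ^ (K + 1) * R := le_mul_of_one_le_left hR (one_le_pow₀ one_le_two)
    have hRK : 2 ^ K * R ≤ 2 ^ (K + 1) * R := by gcongr <;> simp
    have hss := bilinMul_mem_discSeries (fun _ _ => 1) hs hs
    rw [← two_mul, ← mul_assoc, ← pow_succ'] at hss
    exact add_mem (discSeries_mono hRK hs) (Submodule.smul_mem _ _ (sub_mem
      (add_mem (single_zero_mem_discSeries (hR.trans hR1) 1) (discSeries_mono hR1 hx)) hss))

variable {ι : Type*} [AddCommMonoid ι]

lemma sqrtDefect_add_half_smul (x s : ι →₀ ℝ) :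
    sqrtDefect x (s + (1 / 2 : ℝ) • sqrtDefect x s)
      = -bilinMul (fun _ _ => 1) (sqrtDefect x s) (s - Finsupp.single 0 1)
        - (1 / 4 : ℝ) • bilinMul (fun _ _ => 1) (sqrtDefect x s) (sqrtDefect x s) := by
  have hss : bilinMul (fun _ _ => 1) s s = Finsupp.single 0 1 + x - sqrtDefect x s := by
    rw [sqrtDefect, sub_sub_cancel]
  generalize sqrtDefect x s = e at hss ⊢
  simp only [sqrtDefect, map_add, map_sub, map_smul, LinearMap.add_apply, LinearMap.smul_apply,
    bilinMul_one_single_zero]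
  rw [bilinMul_comm (S := fun _ _ => 1) (fun _ _ => rfl) s e, hss]
  module

lemma l1Norm_approxSqrt_le {x : ι →₀ ℝ} {δ : ℝ} (hδ4 : δ ≤ 1 / 4) (hx : l1Norm x ≤ δ) (K : ℕ) :
    l1Norm (approxSqrt x K - Finsupp.single 0 1) ≤ δ - δ * (2 * δ) ^ K ∧
      l1Norm (sqrtDefect x (approxSqrt x K)) ≤ δ * (2 * δ) ^ K := by
  have hδ : 0 ≤ δ := (apply_nonneg _ _).trans hx
  induction K with
  | zero => simpa [approxSqrt, sqrtDefect, bilinMul_one_single_zero] using hx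
  | succ K ih =>
    obtain ⟨hs, he⟩ := ih
    have hη : 0 ≤ δ * (2 * δ) ^ K := by positivity
    have hηδ : δ * (2 * δ) ^ K ≤ δ :=
      mul_le_of_le_one_right hδ (pow_le_one₀ (by linarith) (by linarith))
    constructor
    · rw [approxSqrt, add_sub_right_comm]
      refine (map_add_le_add _ _ _).trans ?_
      rw [map_smul_eq_mul, Real.norm_of_nonneg (by norm_num), pow_succ]
      nlinarith
    · rw [approxSqrt, sqrtDefect_add_half_smul]
      set s := approxSqrt x K
      set e := sqrtDefect x s
      refine (map_sub_le_add _ _ _).trans ?_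
      rw [map_neg_eq_map, map_smul_eq_mul, Real.norm_of_nonneg (by norm_num), pow_succ]
      have hes : l1Norm (bilinMul (fun _ _ => 1) e (s - Finsupp.single 0 1))
          ≤ δ * (2 * δ) ^ K * δ :=
        (l1Norm_bilinMul_one_le _ _).trans
          (mul_le_mul he (by linarith) (apply_nonneg _ _) hη)
      have hee : l1Norm (bilinMul (fun _ _ => 1) e e) ≤ δ * (2 * δ) ^ K * δ :=
        (l1Norm_bilinMul_one_le _ _).trans
          (mul_le_mul he (by linarith) (apply_nonneg _ _) hη)
      linarith [mul_nonneg hη hδ]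

end ApproxSqrt

/-! ### Waves in two fixed directions -/

/-- The two directions of oscillation, scaled to be integral: these are `5 l₁` and `5 l₂`. -/
def waveDir : Fin 2 → Z2 := ![(3, 4), (5, 0)]

lemma knorm_waveDir (j : Fin 2) : knorm (waveDir j) = 5 := by
  rw [knorm, Real.sqrt_eq_iff_mul_self_eq_of_pos (by norm_num)]
  fin_cases j <;> norm_num [waveDir]

lemma RoSym_zero (j : Fin 2) : RoSym j 0 = 0 := if_pos rfl

lemma RoSym_neg (j : Fin 2) (m : Z2) : RoSym j (-m) = RoSym j m := by simp [RoSym]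

lemma abs_RoSym_le (j : Fin 2) (m : Z2) : |RoSym j m| ≤ 3 := by
  by_cases hm : m = 0
  · simp [hm, RoSym_zero]
  have hpos : 0 < (m.1 : ℝ) ^ 2 + (m.2 : ℝ) ^ 2 := knorm_sq m ▸ pow_pos (knorm_pos hm) 2
  rw [RoSym, if_neg hm]
  split_ifs
  · rw [abs_div, abs_of_pos (by positivity : 0 < 12 * ((m.1 : ℝ) ^ 2 + (m.2 : ℝ) ^ 2)),
      div_le_iff₀ (by positivity), abs_le]
    constructor <;> nlinarith [sq_nonneg (m.1 : ℝ), sq_nonneg (m.2 : ℝ)]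
  · rw [← mul_div_mul_left (4 * (m.1 : ℝ) * m.2) _ (by norm_num : (12 : ℝ) ≠ 0), ← add_div, abs_div,
      abs_of_pos (by positivity : 0 < 12 * ((m.1 : ℝ) ^ 2 + (m.2 : ℝ) ^ 2)),
      div_le_iff₀ (by positivity), abs_le]
    constructor <;> nlinarith [sq_nonneg ((m.1 : ℝ) + m.2), sq_nonneg ((m.1 : ℝ) - m.2)]

lemma sum_waveSymbol_mul_RoSym {m : Z2} (hm : m ≠ 0) :
    ∑ j, waveSymbol (waveDir j) m * RoSym j m = 1 := by
  have hpos : 0 < (m.1 : ℝ) ^ 2 + (m.2 : ℝ) ^ 2 := knorm_sq m ▸ pow_pos (knorm_pos hm) 2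
  simp only [Fin.sum_univ_two, waveSymbol, knorm_sq, RoSym, if_neg hm, waveDir, cross, dotZ, toR,
    Matrix.cons_val_zero, Matrix.cons_val_one, if_true, one_ne_zero, if_false]
  push_cast
  field_simp
  ring

/-- The frequencies `± n (3, 4)` and `± n (5, 0)`, the sign being the second component of the
index. -/
def waveVec (n : ℕ) (i : Fin 2 × ℤˣ) : Z2 := ((n : ℤ) * i.2) • waveDir i.1

lemma knorm_waveVec (n : ℕ) (i : Fin 2 × ℤˣ) : knorm (waveVec n i) = 5 * n := by
  rw [waveVec, knorm_zsmul, knorm_waveDir, Int.cast_mul, abs_mul, ← Int.cast_abs (a := (i.2 : ℤ)),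
    Int.isUnit_iff_abs_eq.1 i.2.isUnit]
  simp [mul_comm]

lemma waveVec_neg (n : ℕ) (i : Fin 2 × ℤˣ) : waveVec n (i.1, -i.2) = -waveVec n i := by
  rw [waveVec, Units.val_neg, mul_neg, neg_smul, waveVec]

lemma waveSymbol_waveVec {n : ℕ} (hn : n ≠ 0) (i : Fin 2 × ℤˣ) (m : Z2) :
    waveSymbol (waveVec n i) m = waveSymbol (waveDir i.1) m :=
  waveSymbol_zsmul (mul_ne_zero (Int.natCast_ne_zero.2 hn) i.2.ne_zero) _ _

lemma four_mul_le_knorm_waveVec_add (n : ℕ) {i i' : Fin 2 × ℤˣ} (h : i' ≠ (i.1, -i.2)) :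
    4 * (n : ℝ) ≤ knorm (waveVec n i + waveVec n i') := by
  let d : Fin 2 × ℤˣ → Fin 2 × ℤˣ → Z2 := fun i i' =>
    (i.2 : ℤ) • waveDir i.1 + (i'.2 : ℤ) • waveDir i'.1
  have hsum : waveVec n i + waveVec n i' = (n : ℤ) • d i i' := by
    rw [waveVec, waveVec, mul_smul, mul_smul, ← smul_add]
  have hsep : ∀ i i' : Fin 2 × ℤˣ, i' ≠ (i.1, -i.2) → 16 ≤ (d i i').1 ^ 2 + (d i i').2 ^ 2 := by
    decide
  have hd : 4 ≤ knorm (d i i') :=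
    Real.le_sqrt_of_sq_le (by norm_num only; exact_mod_cast hsep i i' h)
  rw [hsum, knorm_zsmul, Int.cast_natCast, Nat.abs_cast, mul_comm]
  gcongr

/-- The superposition of the four waves `e^{±i n (3, 4) ⋅ x}` and `e^{±i n (5, 0) ⋅ x}`, with
amplitude `a j` in the direction `j`. -/
def wavePacket (n : ℕ) (a : Fin 2 → Z2 →₀ ℝ) : Z2 →₀ ℝ :=
  ∑ i : Fin 2 × ℤˣ, freqShift (waveVec n i) (a i.1)

section WavePacket

variable {n : ℕ} {a : Fin 2 → Z2 →₀ ℝ} {μ T : ℝ}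

lemma wavePacket_apply (n : ℕ) (a : Fin 2 → Z2 →₀ ℝ) (k : Z2) :
    wavePacket n a k = ∑ i : Fin 2 × ℤˣ, a i.1 (k - waveVec n i) := by
  simp only [wavePacket, Finsupp.finsetSum_apply, freqShift_apply]

lemma wavePacket_mem_evenSeries (ha : ∀ j, a j ∈ evenSeries Z2) :
    wavePacket n a ∈ evenSeries Z2 := fun k => by
  rw [wavePacket_apply, wavePacket_apply]
  refine Fintype.sum_equiv ((Equiv.refl _).prodCongr (Equiv.neg _)) _ _ fun i => ?_
  rw [← ha i.1 (-k - _)]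
  congr 1
  change -(-k - waveVec n i) = k - waveVec n (i.1, -i.2)
  rw [waveVec_neg]
  abel

lemma l1Norm_wavePacket_le (haT : ∀ j, l1Norm (a j) ≤ T) : l1Norm (wavePacket n a) ≤ 4 * T := by
  refine (l1Norm_sum_le_card_mul fun i _ => (l1Norm_freqShift _ _).trans_le (haT i.1)).trans_eq ?_
  simp

lemma abs_knorm_sub_le_of_wavePacket_ne_zero (ha : ∀ j, a j ∈ discSeries μ) {k : Z2}
    (hk : wavePacket n a k ≠ 0) : |knorm k - 5 * n| ≤ μ := by
  rw [wavePacket_apply] at hk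
  obtain ⟨i, -, hi⟩ := Finset.exists_ne_zero_of_sum_ne_zero hk
  have h := abs_knorm_add_sub_le (waveVec n i) (k - waveVec n i)
  rw [add_sub_cancel, knorm_waveVec] at h
  exact h.trans (mem_discSeries.1 (ha _) _ hi)

lemma wavePacket_apply_waveVec (ha : ∀ j, a j ∈ discSeries μ) (hμ : μ < 4 * n)
    (i : Fin 2 × ℤˣ) : wavePacket n a (waveVec n i) = a i.1 0 := by
  rw [wavePacket_apply, Fintype.sum_eq_single i, sub_self]
  intro i' hi'
  by_contra hne
  have hsep : 4 * (n : ℝ) ≤ knorm (waveVec n i + waveVec n (i'.1, -i'.2)) :=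
    four_mul_le_knorm_waveVec_add n fun h => hi' (by simpa [Prod.ext_iff] using h)
  rw [waveVec_neg, ← sub_eq_add_neg] at hsep
  linarith [mem_discSeries.1 (ha _) _ hne]

lemma l1Norm_bilinMul_freqShift_le_of_ne (ha : ∀ j, a j ∈ discSeries μ)
    (haT : ∀ j, l1Norm (a j) ≤ T) (hn : n ≠ 0) (hμ0 : 0 ≤ μ) (hμ : 16 * μ ≤ 5 * n)
    {i i' : Fin 2 × ℤˣ} (h : i' ≠ (i.1, -i.2)) :
    l1Norm (bilinMul sqgSymbol (freqShift (waveVec n i) (a i.1))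
        (freqShift (waveVec n i') (a i'.1)))
      ≤ 4 * μ * T ^ 2 := by
  have hn0 : (0 : ℝ) < n := by positivity
  rw [bilinMul_freqShift, l1Norm_freqShift]
  refine (l1Norm_bilinMul_le (M := 4 * μ) fun p p' hp hp' => ?_).trans ?_
  · replace hp := mem_discSeries.1 (ha _) p hp
    replace hp' := mem_discSeries.1 (ha _) p' hp'
    have hk := (abs_knorm_add_sub_le (waveVec n i) p).trans hp
    have hm := (abs_knorm_add_sub_le (waveVec n i') p').trans hp'
    have hsum := abs_le.1 (abs_knorm_add_sub_le (waveVec n i + waveVec n i') (p + p'))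
    rw [add_add_add_comm] at hsum
    rw [knorm_waveVec] at hk hm
    exact abs_sqgSymbol_le_of_annulus hk hm (by linarith) (by positivity)
      (by linarith [four_mul_le_knorm_waveVec_add n h, knorm_add_le p p'])
  · rw [sq, mul_assoc]
    have hT : 0 ≤ T := (apply_nonneg _ _).trans (haT 0)
    gcongr
    exacts [haT _, haT _]

lemma l1Norm_bilinMul_freqShift_neg_sub_le (ha : ∀ j, a j ∈ discSeries μ)
    (haT : ∀ j, l1Norm (a j) ≤ T) (hn : n ≠ 0) (hμ0 : 0 ≤ μ) (hμ : 16 * μ ≤ 5 * n)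
    (i : Fin 2 × ℤˣ) :
    l1Norm (bilinMul sqgSymbol (freqShift (waveVec n i) (a i.1))
          (freqShift (waveVec n (i.1, -i.2)) (a i.1))
        - (5 * n / 2 : ℝ) •
          fourierMul (waveSymbol (waveDir i.1)) (bilinMul (fun _ _ => 1) (a i.1) (a i.1)))
      ≤ 3 * μ * T ^ 2 := by
  have hn0 : (0 : ℝ) < n := by positivity
  have hκ : waveVec n i ≠ 0 := fun h => by
    have := knorm_waveVec n i
    rw [h, knorm_zero] at this
    linarith
  have hmain : (5 * n / 2 : ℝ) •
        fourierMul (waveSymbol (waveDir i.1)) (bilinMul (fun _ _ => 1) (a i.1) (a i.1))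
      = bilinMul (fun p p' => knorm (waveVec n i) / 2 * waveSymbol (waveVec n i) (p + p'))
        (a i.1) (a i.1) := by
    rw [bilinMul_symbol_add fun m => knorm (waveVec n i) / 2 * waveSymbol (waveVec n i) m]
    ext m
    rw [Finsupp.smul_apply, fourierMul_apply, fourierMul_apply, knorm_waveVec,
      waveSymbol_waveVec hn, smul_eq_mul, mul_assoc]
  rw [waveVec_neg, bilinMul_freqShift, add_neg_cancel, freqShift_zero, hmain,
    ← bilinMul_sub_symbol]
  refine (l1Norm_bilinMul_le (M := 3 * μ) fun p p' hp hp' => ?_).trans ?_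
  · exact abs_sqgSymbol_sub_waveSymbol_le hκ (mem_discSeries.1 (ha _) p hp)
      (mem_discSeries.1 (ha _) p' hp') (by rw [knorm_waveVec]; linarith)
  · rw [sq, mul_assoc]
    have hT : 0 ≤ T := (apply_nonneg _ _).trans (haT 0)
    gcongr
    exacts [haT _, haT _]

lemma bilinMul_wavePacket_sub_eq (S : Z2 → Z2 → ℝ) (n : ℕ) (a b : Fin 2 → Z2 →₀ ℝ) :
    bilinMul S (wavePacket n a) (wavePacket n a) - ∑ j, (5 * n : ℝ) • b j
      = ∑ i : Fin 2 × ℤˣ, ((bilinMul S (freqShift (waveVec n i) (a i.1))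
            (freqShift (waveVec n (i.1, -i.2)) (a i.1)) - (5 * n / 2 : ℝ) • b i.1)
          + ∑ i' ∈ Finset.univ.erase (i.1, -i.2),
            bilinMul S (freqShift (waveVec n i) (a i.1)) (freqShift (waveVec n i') (a i'.1))) := by
  have hb : ∑ j, (5 * n : ℝ) • b j = ∑ i : Fin 2 × ℤˣ, (5 * n / 2 : ℝ) • b i.1 := by
    rw [Fintype.sum_prod_type]
    refine Finset.sum_congr rfl fun j _ => ?_
    simp only [Finset.sum_const, Finset.card_univ, Fintype.card_units_int]
    module
  have hbilin : bilinMul S (wavePacket n a) (wavePacket n a)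
      = ∑ i, ∑ i', bilinMul S (freqShift (waveVec n i) (a i.1))
          (freqShift (waveVec n i') (a i'.1)) := by
    simp only [wavePacket, map_sum, LinearMap.sum_apply]
    exact Finset.sum_comm
  rw [hb, hbilin, ← Finset.sum_sub_distrib]
  refine Finset.sum_congr rfl fun i _ => ?_
  rw [← Finset.add_sum_erase _ _ (Finset.mem_univ (i.1, -i.2)), sub_add_eq_add_sub]

lemma l1Norm_bilinMul_wavePacket_sub_le (ha : ∀ j, a j ∈ discSeries μ)
    (haT : ∀ j, l1Norm (a j) ≤ T) (hn : n ≠ 0) (hμ0 : 0 ≤ μ) (hμ : 16 * μ ≤ 5 * n) :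
    l1Norm (bilinMul sqgSymbol (wavePacket n a) (wavePacket n a)
        - ∑ j, (5 * n : ℝ) •
          fourierMul (waveSymbol (waveDir j)) (bilinMul (fun _ _ => 1) (a j) (a j)))
      ≤ 60 * μ * T ^ 2 := by
  rw [bilinMul_wavePacket_sub_eq]
  refine (l1Norm_sum_le_card_mul (M := 15 * μ * T ^ 2) fun i _ => ?_).trans_eq ?_
  · refine (map_add_le_add _ _ _).trans ?_
    have hopp := l1Norm_bilinMul_freqShift_neg_sub_le ha haT hn hμ0 hμ i
    have hcross := l1Norm_sum_le_card_mul fun i' hi' =>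
      l1Norm_bilinMul_freqShift_le_of_ne ha haT hn hμ0 hμ (i := i)
        (Finset.ne_of_mem_erase (s := Finset.univ) hi')
    have hcard : (Finset.univ.erase (i.1, -i.2)).card = 3 := by
      rw [Finset.card_erase_of_mem (Finset.mem_univ _)]
      rfl
    rw [hcard] at hcross
    push_cast at hcross
    linarith
  · simp only [Finset.card_univ, Fintype.card_prod, Fintype.card_fin, Fintype.card_units_int]
    push_cast
    ring

end WavePacket

/-! ### Correction of an approximate solution -/

/-- The residual of `f = Λ⁻¹θ` in the SQG equation, with `Δ⁻¹` applied. -/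
def sqgResidual (ν γ : ℝ) (f : Z2 →₀ ℝ) : Z2 →₀ ℝ :=
  bilinMul sqgSymbol f f + fourierMul (fun k => ν * knorm k ^ (γ - 1)) f

section Residual

variable {ν γ : ℝ} {f : Z2 →₀ ℝ}

lemma sqgResidual_zero (ν γ : ℝ) : sqgResidual ν γ 0 = 0 := by
  rw [sqgResidual, map_zero, map_zero, add_zero]

lemma sqgResidual_mem_discSeries {R : ℝ} (hR : 0 ≤ R) (hf : f ∈ discSeries R) :
    sqgResidual ν γ f ∈ discSeries (2 * R) :=
  add_mem (two_mul R ▸ bilinMul_mem_discSeries _ hf hf)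
    (discSeries_mono (by linarith) (fourierMul_mem_discSeries _ hf))

lemma sqgResidual_mem_evenSeries (hf : f ∈ evenSeries Z2) : sqgResidual ν γ f ∈ evenSeries Z2 :=
  add_mem (bilinMul_mem_evenSeries sqgSymbol_neg_neg hf hf)
    (fourierMul_mem_evenSeries (fun k => by rw [knorm_neg]) hf)

lemma sqgResidual_apply_zero (hf : f 0 = 0) : sqgResidual ν γ f 0 = 0 := by
  rw [sqgResidual, Finsupp.add_apply, fourierMul_apply, hf, mul_zero, add_zero, bilinMul_apply]
  refine Finset.sum_eq_zero fun k _ => ?_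
  rw [sqgSymbol_of_add_eq_zero (add_sub_cancel k 0), zero_mul, zero_mul]

lemma sqgResidual_add (ν γ : ℝ) (f w : Z2 →₀ ℝ) :
    sqgResidual ν γ (f + w) = sqgResidual ν γ f + bilinMul sqgSymbol w w
      + (2 : ℝ) • bilinMul sqgSymbol f w + fourierMul (fun k => ν * knorm k ^ (γ - 1)) w := by
  simp only [sqgResidual, map_add, LinearMap.add_apply]
  rw [bilinMul_comm sqgSymbol_comm w f, two_smul]
  abel

end Residual

lemma rpow_le_two_rpow_abs_mul_rpow {x lam : ℝ} (s : ℝ) (hlam : 0 < lam) (hx : lam / 2 ≤ x)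
    (hx' : x ≤ 2 * lam) : x ^ s ≤ 2 ^ |s| * lam ^ s := by
  have hx0 : 0 < x := by linarith
  rcases le_total 0 s with hs | hs
  · rw [abs_of_nonneg hs, ← Real.mul_rpow zero_le_two hlam.le]
    exact Real.rpow_le_rpow hx0.le hx' hs
  · rw [abs_of_nonpos hs, Real.rpow_neg zero_le_two, ← Real.inv_rpow zero_le_two,
      ← Real.mul_rpow (by norm_num) hlam.le]
    exact Real.rpow_le_rpow_of_nonpos (by positivity) (by linarith) hs

lemma l1Norm_fourierMul_rpow_le {w : Z2 →₀ ℝ} {lam : ℝ} (s : ℝ) (hlam : 0 < lam)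
    (hw : ∀ k, w k ≠ 0 → |knorm k - lam| ≤ lam / 2) :
    l1Norm (fourierMul (fun k => knorm k ^ s) w) ≤ 2 ^ |s| * lam ^ s * l1Norm w := by
  refine l1Norm_fourierMul_le fun k hk => ?_
  have hk' := abs_le.1 (hw k hk)
  rw [abs_of_nonneg (Real.rpow_nonneg (knorm_nonneg k) s)]
  exact rpow_le_two_rpow_abs_mul_rpow s hlam (by linarith) (by linarith)

lemma l1Norm_bilinMul_sqgSymbol_le (f w : Z2 →₀ ℝ) :
    l1Norm (bilinMul sqgSymbol f w) ≤ l1Norm (fourierMul knorm f) * l1Norm w / 2 := by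
  have h := l1Norm_bilinMul_le_mul (f := f) (g := w) (u := knorm) (v := fun _ => 1 / 2)
    fun k m => (abs_sqgSymbol_le_left k m).trans_eq (by ring)
  have h' : l1Norm (fourierMul (fun _ => 1 / 2 : Z2 → ℝ) w) ≤ 1 / 2 * l1Norm w :=
    l1Norm_fourierMul_le fun _ _ => (abs_of_nonneg (by norm_num)).le
  linarith [mul_le_mul_of_nonneg_left h' (apply_nonneg l1Norm (fourierMul knorm f))]

/-- The choice of amplitudes: if `s_j² ≈ 1 - R_j^o q / r` for `j = 1, 2`, then the
low-frequency interactions `r s_j²` of the waves cancel `q`. -/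
lemma add_sum_smul_fourierMul_eq {q : Z2 →₀ ℝ} (hq : q 0 = 0) {r : ℝ} (hr : r ≠ 0)
    (s : Fin 2 → Z2 →₀ ℝ) :
    q + ∑ j, r • fourierMul (waveSymbol (waveDir j)) (bilinMul (fun _ _ => 1) (s j) (s j))
      = -∑ j, r • fourierMul (waveSymbol (waveDir j))
          (sqrtDefect (-(1 / r) • fourierMul (RoSym j) q) (s j)) := by
  have hcancel : ∑ j, r • fourierMul (waveSymbol (waveDir j))
      (Finsupp.single 0 1 + -(1 / r) • fourierMul (RoSym j) q) = -q := by
    ext m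
    by_cases hm : m = 0
    · simp [hm, hq, waveSymbol]
    · have h := sum_waveSymbol_mul_RoSym hm
      rw [Fin.sum_univ_two] at h
      simp only [Fin.sum_univ_two, Finsupp.add_apply, Finsupp.smul_apply, Finsupp.neg_apply,
        fourierMul_apply, smul_eq_mul, Finsupp.single_eq_of_ne hm]
      field_simp
      linear_combination -q m * h
  simp only [sqrtDefect, map_sub, smul_sub, Finset.sum_sub_distrib, hcancel]
  abel

/-- The amplitude `t √(1 - R_j^o q / r)` in direction `j`, with an approximate square root. -/
def waveAmplitude (q : Z2 →₀ ℝ) (r t : ℝ) (K : ℕ) (j : Fin 2) : Z2 →₀ ℝ :=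
  t • approxSqrt (-(1 / r) • fourierMul (RoSym j) q) K

section WaveAmplitude

variable {q : Z2 →₀ ℝ} {r t δ : ℝ}

lemma waveAmplitude_mem_evenSeries (hq : q ∈ evenSeries Z2) (r t : ℝ) (K : ℕ) (j : Fin 2) :
    waveAmplitude q r t K j ∈ evenSeries Z2 :=
  Submodule.smul_mem _ _ (approxSqrt_mem_evenSeries
    (Submodule.smul_mem _ _ (fourierMul_mem_evenSeries (RoSym_neg j) hq)) K)

lemma waveAmplitude_mem_discSeries {R : ℝ} (hR : 0 ≤ R) (hq : q ∈ discSeries R) (r t : ℝ) (K : ℕ)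
    (j : Fin 2) : waveAmplitude q r t K j ∈ discSeries (2 ^ K * R) :=
  Submodule.smul_mem _ _ (approxSqrt_mem_discSeries hR
    (Submodule.smul_mem _ _ (fourierMul_mem_discSeries _ hq)) K)

lemma l1Norm_neg_smul_fourierMul_RoSym_le (hr : 0 < r) (hδ : 3 * l1Norm q ≤ δ * r) (j : Fin 2) :
    l1Norm (-(1 / r) • fourierMul (RoSym j) q) ≤ δ := by
  rw [map_smul_eq_mul, norm_neg, Real.norm_of_nonneg (by positivity), one_div_mul_eq_div,
    div_le_iff₀ hr]
  exact (l1Norm_fourierMul_le fun k _ => abs_RoSym_le j k).trans hδ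

lemma l1Norm_approxSqrt_sub_one_le (hr : 0 < r) (hδ : 3 * l1Norm q ≤ δ * r) (hδ4 : δ ≤ 1 / 4)
    (K : ℕ) (j : Fin 2) :
    l1Norm (approxSqrt (-(1 / r) • fourierMul (RoSym j) q) K - Finsupp.single 0 1) ≤ 1 / 4 := by
  have h := l1Norm_neg_smul_fourierMul_RoSym_le hr hδ j
  have hδ0 : 0 ≤ δ := (apply_nonneg _ _).trans h
  have hpos : 0 ≤ δ * (2 * δ) ^ K := by positivity
  linarith [(l1Norm_approxSqrt_le hδ4 h K).1]

lemma l1Norm_waveAmplitude_le (ht : 0 ≤ t) (hr : 0 < r) (hδ : 3 * l1Norm q ≤ δ * r)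
    (hδ4 : δ ≤ 1 / 4) (K : ℕ) (j : Fin 2) : l1Norm (waveAmplitude q r t K j) ≤ 2 * t := by
  rw [waveAmplitude, map_smul_eq_mul, Real.norm_of_nonneg ht, mul_comm]
  gcongr
  have h := map_add_le_add l1Norm
    (approxSqrt (-(1 / r) • fourierMul (RoSym j) q) K - Finsupp.single 0 1) (Finsupp.single 0 1)
  rw [sub_add_cancel, l1Norm_single, abs_one] at h
  linarith [l1Norm_approxSqrt_sub_one_le hr hδ hδ4 K j]

lemma waveAmplitude_apply_zero_ne_zero (ht : t ≠ 0) (hr : 0 < r) (hδ : 3 * l1Norm q ≤ δ * r)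
    (hδ4 : δ ≤ 1 / 4) (K : ℕ) (j : Fin 2) : waveAmplitude q r t K j 0 ≠ 0 := by
  rw [waveAmplitude, Finsupp.smul_apply]
  refine smul_ne_zero ht fun h => ?_
  have h' := (abs_apply_le_l1Norm _ 0).trans (l1Norm_approxSqrt_sub_one_le hr hδ hδ4 K j)
  rw [Finsupp.sub_apply, h, Finsupp.single_eq_same, zero_sub, abs_neg, abs_one] at h'
  norm_num at h'

lemma l1Norm_add_sum_fourierMul_waveAmplitude_le {lam : ℝ} (hq : q 0 = 0) (hr : 0 < r)
    (hrt : lam * t ^ 2 = r) (hδ : 3 * l1Norm q ≤ δ * r) (hδ4 : δ ≤ 1 / 4) (K : ℕ) :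
    l1Norm (q + ∑ j, lam • fourierMul (waveSymbol (waveDir j))
        (bilinMul (fun _ _ => 1) (waveAmplitude q r t K j) (waveAmplitude q r t K j)))
      ≤ 2 * r * (δ * (2 * δ) ^ K) := by
  have hscale : ∀ j, lam • fourierMul (waveSymbol (waveDir j))
        (bilinMul (fun _ _ => 1) (waveAmplitude q r t K j) (waveAmplitude q r t K j))
      = r • fourierMul (waveSymbol (waveDir j)) (bilinMul (fun _ _ => 1)
          (approxSqrt (-(1 / r) • fourierMul (RoSym j) q) K)
          (approxSqrt (-(1 / r) • fourierMul (RoSym j) q) K)) := fun j => by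
    simp only [waveAmplitude, map_smul, LinearMap.smul_apply, smul_smul, ← hrt, sq]
  simp only [hscale]
  rw [add_sum_smul_fourierMul_eq hq hr.ne', map_neg_eq_map]
  refine (l1Norm_sum_le_card_mul (M := r * (δ * (2 * δ) ^ K)) fun j _ => ?_).trans_eq ?_
  · rw [map_smul_eq_mul, Real.norm_of_nonneg hr.le]
    gcongr
    refine (l1Norm_fourierMul_le fun k _ => abs_waveSymbol_le_one (waveDir j) k).trans ?_
    rw [one_mul]
    exact (l1Norm_approxSqrt_le hδ4 (l1Norm_neg_smul_fourierMul_RoSym_le hr hδ j) K).2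
  · simp only [Finset.card_univ, Fintype.card_fin]
    push_cast
    ring

end WaveAmplitude

lemma l1Norm_fourierMul_viscous_le {w : Z2 →₀ ℝ} {lam : ℝ} (ν γ : ℝ) (hlam : 0 < lam)
    (hw : ∀ k, w k ≠ 0 → |knorm k - lam| ≤ lam / 2) :
    l1Norm (fourierMul (fun k => ν * knorm k ^ (γ - 1)) w)
      ≤ |ν| * 2 ^ |γ - 1| * lam ^ (γ - 1) * l1Norm w := by
  have hν : fourierMul (fun k => ν * knorm k ^ (γ - 1)) w
      = ν • fourierMul (fun k => knorm k ^ (γ - 1)) w := by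
    ext k
    simp only [fourierMul_apply, Finsupp.smul_apply, smul_eq_mul, mul_assoc]
  rw [hν, map_smul_eq_mul, Real.norm_eq_abs, mul_assoc, mul_assoc, ← mul_assoc (2 ^ |γ - 1|)]
  gcongr
  exact l1Norm_fourierMul_rpow_le _ hlam hw

theorem exists_sqgResidual_add_le {f : Z2 →₀ ℝ} {R t δ : ℝ} {n K : ℕ} (ν γ : ℝ)
    (hf : f ∈ evenSeries Z2) (hf0 : f 0 = 0) (hR : 0 ≤ R) (hfR : f ∈ discSeries R) (ht : 0 < t)
    (hn : n ≠ 0) (hμ : 16 * (2 ^ K * (2 * R)) ≤ 5 * n) (hδ4 : δ ≤ 1 / 4)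
    (hδ : 3 * l1Norm (sqgResidual ν γ f) ≤ δ * (5 * n * t ^ 2)) :
    ∃ w ∈ evenSeries Z2, w ≠ 0 ∧ (∀ k, w k ≠ 0 → |knorm k - 5 * n| ≤ 2 ^ K * (2 * R)) ∧
      l1Norm w ≤ 8 * t ∧
      l1Norm (sqgResidual ν γ (f + w)) ≤ 240 * (2 ^ K * (2 * R)) * t ^ 2
        + 8 * l1Norm (fourierMul knorm f) * t
        + 8 * (|ν| * 2 ^ |γ - 1|) * (5 * n : ℝ) ^ (γ - 1) * t
        + 2 * (5 * n * t ^ 2) * (δ * (2 * δ) ^ K) := by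
  set μ := 2 ^ K * (2 * R)
  set q := sqgResidual ν γ f
  set r : ℝ := 5 * n * t ^ 2
  set a := waveAmplitude q r t K
  have hn0 : (0 : ℝ) < n := by positivity
  have hr : 0 < r := by positivity
  have ha : ∀ j, a j ∈ discSeries μ :=
    waveAmplitude_mem_discSeries (by positivity) (sqgResidual_mem_discSeries hR hfR) r t K
  have haT : ∀ j, l1Norm (a j) ≤ 2 * t := l1Norm_waveAmplitude_le ht.le hr hδ hδ4 K
  have hw8 : l1Norm (wavePacket n a) ≤ 8 * t := (l1Norm_wavePacket_le haT).trans_eq (by ring)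
  have hwμ := fun k => abs_knorm_sub_le_of_wavePacket_ne_zero (k := k) (n := n) ha
  refine ⟨wavePacket n a,
    wavePacket_mem_evenSeries (waveAmplitude_mem_evenSeries (sqgResidual_mem_evenSeries hf) r t K),
    fun h => ?_, hwμ, hw8, ?_⟩
  · refine waveAmplitude_apply_zero_ne_zero ht.ne' hr hδ hδ4 K 1 ?_
    rw [← wavePacket_apply_waveVec ha (by linarith) (1, 1), h, Finsupp.zero_apply]
  set s := ∑ j, (5 * n : ℝ) •
    fourierMul (waveSymbol (waveDir j)) (bilinMul (fun _ _ => 1) (a j) (a j))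
  set w := wavePacket n a
  have hself : l1Norm (bilinMul sqgSymbol w w - s) ≤ 60 * μ * (2 * t) ^ 2 :=
    l1Norm_bilinMul_wavePacket_sub_le ha haT hn (by positivity) hμ
  have hlow : l1Norm (q + s) ≤ 2 * r * (δ * (2 * δ) ^ K) :=
    l1Norm_add_sum_fourierMul_waveAmplitude_le (sqgResidual_apply_zero hf0) hr rfl hδ hδ4 K
  have hcross : l1Norm ((2 : ℝ) • bilinMul sqgSymbol f w)
      ≤ 8 * l1Norm (fourierMul knorm f) * t := by
    rw [map_smul_eq_mul, Real.norm_of_nonneg zero_le_two]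
    linarith [l1Norm_bilinMul_sqgSymbol_le f w,
      mul_le_mul_of_nonneg_left hw8 (apply_nonneg l1Norm (fourierMul knorm f))]
  have hvisc : l1Norm (fourierMul (fun k => ν * knorm k ^ (γ - 1)) w)
      ≤ |ν| * 2 ^ |γ - 1| * (5 * n : ℝ) ^ (γ - 1) * (8 * t) :=
    (l1Norm_fourierMul_viscous_le ν γ (by positivity) fun k hk =>
      (hwμ k hk).trans (by linarith)).trans (by gcongr)
  have hsplit : sqgResidual ν γ (f + w) = (q + s) + (bilinMul sqgSymbol w w - s)
      + (2 : ℝ) • bilinMul sqgSymbol f w + fourierMul (fun k => ν * knorm k ^ (γ - 1)) w := by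
    rw [sqgResidual_add]
    abel
  rw [hsplit]
  linarith [map_add_le_add l1Norm (q + s + (bilinMul sqgSymbol w w - s)
      + (2 : ℝ) • bilinMul sqgSymbol f w) (fourierMul (fun k => ν * knorm k ^ (γ - 1)) w),
    map_add_le_add l1Norm (q + s + (bilinMul sqgSymbol w w - s)) ((2 : ℝ) • bilinMul sqgSymbol f w),
    map_add_le_add l1Norm (q + s) (bilinMul sqgSymbol w w - s)]

/-! ### Iteration -/

/-- Exponents for which the error terms of one correction step, from frequency `λ` to `λ ^ b`,
improve the residual bound `λ ^ -(b (2a - 1 + ε))`. The `K`-fold iterated approximate square root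
accounts for the last condition. -/
structure AdmissibleExponents (γ a b ε : ℝ) (K : ℕ) : Prop where
  one_lt : 1 < b
  eps_pos : 0 < ε
  self_interaction : 1 / b - 2 * a < -(b * (2 * a - 1 + ε))
  cross_interaction : (1 - a) / b - a < -(b * (2 * a - 1 + ε))
  viscous : γ - 1 - a < -(b * (2 * a - 1 + ε))
  sqrt_defect : -(2 * a - 1) - (K + 1) * ε < -(b * (2 * a - 1 + ε))

lemma exists_admissibleExponents {γ a : ℝ} (ha : 1 / 2 < a) (ha' : a < 2 / 3)
    (haγ : a < 2 - γ) : ∃ b ε K, AdmissibleExponents γ a b ε K := by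
  have hβ : 0 < 2 * a - 1 := by linarith
  obtain ⟨b, hb1, hb2⟩ : ∃ b, 1 < b ∧
      b < min ((1 - a) / (2 * a - 1)) ((1 + a - γ) / (2 * a - 1)) :=
    exists_between <| lt_min (by rw [lt_div_iff₀ hβ]; linarith) (by rw [lt_div_iff₀ hβ]; linarith)
  obtain ⟨hcross, hvisc⟩ := lt_min_iff.1 hb2
  rw [lt_div_iff₀ hβ] at hcross hvisc
  have hb0 : 0 < b := by linarith
  have hfactor : (1 - a) / b - a + b * (2 * a - 1)
      = (b - 1) * (b * (2 * a - 1) - (1 - a)) / b := by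
    field_simp
    ring
  have hgap : (1 - a) / b - a + b * (2 * a - 1) < 0 :=
    hfactor ▸ div_neg_of_neg_of_pos (mul_neg_of_pos_of_neg (by linarith) (by linarith)) hb0
  obtain ⟨ε, hε0, hε⟩ : ∃ ε, 0 < ε ∧
      ε < min ((a - (1 - a) / b - b * (2 * a - 1)) / b) ((1 + a - γ - b * (2 * a - 1)) / b) :=
    exists_between <| lt_min (div_pos (by linarith) hb0) (div_pos (by linarith) hb0)
  obtain ⟨hεcross, hεvisc⟩ := lt_min_iff.1 hε
  rw [lt_div_iff₀ hb0] at hεcross hεvisc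
  obtain ⟨K, hK⟩ := exists_nat_gt (b * (2 * a - 1 + ε) / ε)
  rw [div_lt_iff₀ hε0] at hK
  have hself : 1 / b - 2 * a < (1 - a) / b - a := by
    have hsplit : 1 / b = (1 - a) / b + a / b := by ring
    have hab : a / b < a := div_lt_self (by linarith) hb1
    linarith
  exact ⟨b, ε, K, hb1, hε0, by linarith, by linarith, by linarith, by linarith⟩

lemma eventually_mul_rpow_le (C : ℝ) {s t : ℝ} (h : s < t) :
    ∀ᶠ X : ℝ in atTop, C * X ^ s ≤ X ^ t := by
  filter_upwards [(tendsto_rpow_atTop (sub_pos.2 h)).eventually_ge_atTop C, eventually_gt_atTop 0]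
    with X hX hX0
  calc C * X ^ s ≤ X ^ (t - s) * X ^ s := by gcongr
    _ = X ^ t := by rw [← Real.rpow_add hX0, sub_add_cancel]

lemma AdmissibleExponents.eventually_error_le {γ a b ε : ℝ} {K : ℕ}
    (h : AdmissibleExponents γ a b ε K) (ha' : a ≤ 1) (N D : ℝ) :
    ∀ᶠ X : ℝ in atTop, ∀ L, 0 ≤ L → L ≤ X ^ (1 / b) →
      240 * (2 ^ K * (2 * (2 * L))) * (X ^ (-a)) ^ 2 + 8 * (32 * L ^ (1 - a)) * X ^ (-a)
        + 8 * N * X ^ (γ - 1) * X ^ (-a)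
        + 2 * (X * (X ^ (-a)) ^ 2) * (D * X ^ (-ε) * (2 * (D * X ^ (-ε))) ^ K)
      ≤ X ^ (-(b * (2 * a - 1 + ε))) := by
  filter_upwards [eventually_mul_rpow_le (4 * (960 * 2 ^ K)) h.self_interaction,
    eventually_mul_rpow_le (4 * 256) h.cross_interaction,
    eventually_mul_rpow_le (4 * (8 * N)) h.viscous,
    eventually_mul_rpow_le (4 * (2 * D * (2 * D) ^ K)) h.sqrt_defect, eventually_gt_atTop 0]
    with X hself hcross hvisc hdefect hX L hL hLX
  have hLa : L ^ (1 - a) ≤ X ^ (1 / b * (1 - a)) := by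
    rw [Real.rpow_mul hX.le]
    exact Real.rpow_le_rpow hL hLX (by linarith)
  have hself' : L * (X ^ (-a)) ^ 2 ≤ X ^ (1 / b - 2 * a) := by
    rw [show 1 / b - 2 * a = 1 / b + -a * (2 : ℕ) by push_cast; ring, Real.rpow_add hX,
      Real.rpow_mul_natCast hX.le]
    gcongr
  have hcross' : L ^ (1 - a) * X ^ (-a) ≤ X ^ ((1 - a) / b - a) := by
    rw [show (1 - a) / b - a = 1 / b * (1 - a) + -a by ring, Real.rpow_add hX]
    gcongr
  have hvisc' : X ^ (γ - 1) * X ^ (-a) = X ^ (γ - 1 - a) := by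
    rw [← Real.rpow_add hX, ← sub_eq_add_neg]
  have hdefect' : X * (X ^ (-a)) ^ 2 * (X ^ (-ε) * (X ^ (-ε)) ^ K)
      = X ^ (-(2 * a - 1) - (K + 1) * ε) := by
    rw [show -(2 * a - 1) - (K + 1) * ε = 1 + -a * (2 : ℕ) + (-ε + -ε * K) by push_cast; ring,
      Real.rpow_add hX, Real.rpow_add hX, Real.rpow_add hX, Real.rpow_mul_natCast hX.le,
      Real.rpow_mul_natCast hX.le, Real.rpow_one]
  have hself'' : 960 * 2 ^ K * (L * (X ^ (-a)) ^ 2) ≤ 960 * 2 ^ K * X ^ (1 / b - 2 * a) := by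
    gcongr
  rw [← hvisc'] at hvisc
  rw [← hdefect'] at hdefect
  rw [mul_pow] at hdefect
  simp only [mul_pow]
  linarith

/-- An approximate solution at frequency `L`: a trigonometric polynomial of degree at most `2L`
with the regularity of a sum of waves of size `λ ^ -a`, `λ ≤ L`, and small residual. -/
structure IsApproxSolution (ν γ a η L : ℝ) (f : Z2 →₀ ℝ) : Prop where
  even : f ∈ evenSeries Z2
  apply_zero : f 0 = 0
  mem_discSeries : f ∈ discSeries (2 * L)
  l1Norm_knorm_le : l1Norm (fourierMul knorm f) ≤ 32 * L ^ (1 - a)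
  l1Norm_residual_le : l1Norm (sqgResidual ν γ f) ≤ L ^ (-η)

/-- A nonzero wave of frequency `lam` and size `lam ^ -a`. -/
structure IsWave (a lam : ℝ) (w : Z2 →₀ ℝ) : Prop where
  even : w ∈ evenSeries Z2
  ne_zero : w ≠ 0
  abs_knorm_sub_le : ∀ k, w k ≠ 0 → |knorm k - lam| ≤ lam / 2
  l1Norm_le : l1Norm w ≤ 8 * lam ^ (-a)

lemma IsApproxSolution.zero (ν γ a η : ℝ) {L : ℝ} (hL : 0 ≤ L) :
    IsApproxSolution ν γ a η L 0 where
  even := zero_mem _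
  apply_zero := rfl
  mem_discSeries := zero_mem _
  l1Norm_knorm_le := by
    rw [map_zero, map_zero]
    positivity
  l1Norm_residual_le := by
    rw [sqgResidual_zero, map_zero]
    positivity

lemma IsWave.apply_zero {a lam : ℝ} {w : Z2 →₀ ℝ} (h : IsWave a lam w) (hlam : 0 < lam) :
    w 0 = 0 := by
  by_contra h0
  have := abs_le.1 (h.abs_knorm_sub_le 0 h0)
  rw [knorm_zero] at this
  linarith

lemma IsWave.mem_discSeries {a lam : ℝ} {w : Z2 →₀ ℝ} (h : IsWave a lam w) (hlam : 0 ≤ lam) :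
    w ∈ discSeries (2 * lam) :=
  _root_.mem_discSeries.2 fun k hk => by linarith [(abs_le.1 (h.abs_knorm_sub_le k hk)).2]

lemma IsWave.l1Norm_rpow_le {a lam : ℝ} {w : Z2 →₀ ℝ} (h : IsWave a lam w) (hlam : 0 < lam)
    (s : ℝ) : l1Norm (fourierMul (fun k => knorm k ^ s) w) ≤ 8 * 2 ^ |s| * lam ^ (s - a) := by
  refine (l1Norm_fourierMul_rpow_le s hlam h.abs_knorm_sub_le).trans ?_
  rw [sub_eq_add_neg, Real.rpow_add hlam]
  linarith [mul_le_mul_of_nonneg_left h.l1Norm_le (by positivity : 0 ≤ 2 ^ |s| * lam ^ s)]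

lemma IsApproxSolution.add_isWave {ν γ a η L X : ℝ} {f w : Z2 →₀ ℝ}
    (hf : IsApproxSolution ν γ a η L f) (hw : IsWave a X w) (hX : 0 < X) (hLX : L ≤ X)
    (hLX' : 2 * L ^ (1 - a) ≤ X ^ (1 - a))
    (hres : l1Norm (sqgResidual ν γ (f + w)) ≤ X ^ (-η)) : IsApproxSolution ν γ a η X (f + w) where
  even := add_mem hf.even hw.even
  apply_zero := by rw [Finsupp.add_apply, hf.apply_zero, hw.apply_zero hX, add_zero]
  mem_discSeries := add_mem (discSeries_mono (by linarith) hf.mem_discSeries)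
    (hw.mem_discSeries hX.le)
  l1Norm_knorm_le := by
    have h := hw.l1Norm_rpow_le hX 1
    simp only [Real.rpow_one, abs_one] at h
    rw [map_add]
    linarith [map_add_le_add l1Norm (fourierMul knorm f) (fourierMul knorm w), hf.l1Norm_knorm_le]
  l1Norm_residual_le := hres

lemma IsApproxSolution.three_mul_l1Norm_residual_le {ν γ a b ε L X : ℝ} {f : Z2 →₀ ℝ}
    (hf : IsApproxSolution ν γ a (b * (2 * a - 1 + ε)) L f) (hσ : 0 ≤ 2 * a - 1 + ε) (hL : 0 < L)
    (hX : 0 < X) (hXL : X ≤ 10 * L ^ b) :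
    3 * l1Norm (sqgResidual ν γ f)
      ≤ 3 * 10 ^ (2 * a - 1 + ε) * X ^ (-ε) * (X * (X ^ (-a)) ^ 2) := by
  have hXσ : X ^ (-ε) * (X * (X ^ (-a)) ^ 2) = X ^ (-(2 * a - 1 + ε)) := by
    rw [show -(2 * a - 1 + ε) = -ε + (1 + -a * (2 : ℕ)) by push_cast; ring, Real.rpow_add hX,
      Real.rpow_add hX, Real.rpow_mul_natCast hX.le, Real.rpow_one]
  have hres : L ^ (-(b * (2 * a - 1 + ε))) ≤ 10 ^ (2 * a - 1 + ε) * X ^ (-(2 * a - 1 + ε)) := by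
    rw [Real.rpow_neg hX.le, ← div_eq_mul_inv, ← Real.div_rpow (by norm_num) hX.le,
      Real.rpow_neg hL.le, Real.rpow_mul hL.le, ← Real.inv_rpow (by positivity)]
    refine Real.rpow_le_rpow (by positivity) ?_ hσ
    rw [inv_le_comm₀ (by positivity) (by positivity), inv_div]
    linarith
  rw [mul_assoc, hXσ]
  linarith [hf.l1Norm_residual_le]

lemma exists_nat_five_mul_le_rpow {b L : ℝ} (hb : 1 < b) (hL : 1 ≤ L) :
    ∃ n : ℕ, n ≠ 0 ∧ L ^ b ≤ 5 * n ∧ 5 * L ≤ 5 * n ∧ 5 * n ≤ 10 * L ^ b := by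
  have hLb : L ≤ L ^ b := Real.self_le_rpow_of_one_le hL hb.le
  have hceil := Nat.le_ceil (L ^ b)
  have hceil' := Nat.ceil_lt_add_one (a := L ^ b) (by linarith)
  exact ⟨⌈L ^ b⌉₊, (Nat.ceil_pos.2 (by linarith)).ne', by linarith, by linarith, by linarith⟩

lemma AdmissibleExponents.eventually_exists_isWave {γ a b ε : ℝ} {K : ℕ}
    (h : AdmissibleExponents γ a b ε K) (ν : ℝ) (ha : 1 / 2 < a) (ha' : a < 1) :
    ∀ᶠ L in atTop, ∀ f, IsApproxSolution ν γ a (b * (2 * a - 1 + ε)) L f → ∃ X w,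
      5 * L ≤ X ∧ IsWave a X w ∧ IsApproxSolution ν γ a (b * (2 * a - 1 + ε)) X (f + w) := by
  have hb : 1 / b < 1 := (div_lt_one (by linarith [h.one_lt])).2 h.one_lt
  have hε := h.eps_pos
  set D : ℝ := 3 * 10 ^ (2 * a - 1 + ε)
  obtain ⟨X₀, hX₀⟩ := eventually_atTop.1 <|
    (h.eventually_error_le ha'.le (|ν| * 2 ^ |γ - 1|) D).and <|
    (eventually_mul_rpow_le (4 * D) (neg_neg_of_pos h.eps_pos)).and <|
    (eventually_mul_rpow_le (16 * (2 ^ K * 4)) hb).and <|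
    eventually_mul_rpow_le 2 (mul_lt_of_lt_one_left (sub_pos.2 ha') hb)
  filter_upwards [eventually_ge_atTop X₀, eventually_ge_atTop 1] with L hLX₀ hL f hf
  obtain ⟨n, hn, hLn, hLn5, hnL⟩ := exists_nat_five_mul_le_rpow h.one_lt hL
  set X : ℝ := 5 * n
  have hX : 0 < X := by linarith
  have hLX : L ≤ X ^ (1 / b) := by
    rw [one_div]
    exact (Real.le_rpow_inv_iff_of_pos (by linarith) hX.le (by linarith [h.one_lt])).2 hLn
  obtain ⟨herr, hδ4, hμ, hw⟩ := hX₀ X (by linarith)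
  rw [Real.rpow_zero] at hδ4
  rw [Real.rpow_one] at hμ
  have hμL : 16 * (2 ^ K * (2 * (2 * L))) ≤ X := by
    refine le_trans ?_ hμ
    rw [show 16 * (2 ^ K * (2 * (2 * L))) = 16 * (2 ^ K * 4) * L by ring]
    gcongr
  obtain ⟨w, hw_even, hw_ne, hw_supp, hw_norm, hres⟩ := exists_sqgResidual_add_le (K := K) ν γ
    hf.even hf.apply_zero (by linarith) hf.mem_discSeries (Real.rpow_pos_of_pos hX (-a)) hn hμL
    (δ := D * X ^ (-ε)) (by linarith)
    (hf.three_mul_l1Norm_residual_le (by linarith) (by linarith) hX hnL)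
  have hwave : IsWave a X w :=
    ⟨hw_even, hw_ne, fun k hk => (hw_supp k hk).trans (by linarith), hw_norm⟩
  refine ⟨X, w, hLn5, hwave, hf.add_isWave hwave hX (by linarith) (hw.trans' ?_) (hres.trans ?_)⟩
  · rw [Real.rpow_mul hX.le]
    gcongr
  · refine (herr L (by linarith) hLX).trans' ?_
    gcongr
    exact hf.l1Norm_knorm_le

lemma exists_seq_of_forall_exists {α : Type*} {p : α → Prop} {r : α → α → Prop} {x₀ : α}
    (h₀ : p x₀) (h : ∀ x, p x → ∃ y, p y ∧ r x y) :
    ∃ s : ℕ → α, s 0 = x₀ ∧ ∀ n, p (s n) ∧ r (s n) (s (n + 1)) := by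
  choose! next hp hr using h
  have hs : ∀ n, p (next^[n] x₀) := fun n => by
    induction n with
    | zero => exact h₀
    | succ n ih =>
      rw [Function.iterate_succ_apply']
      exact hp _ ih
  refine ⟨fun n => next^[n] x₀, rfl, fun n => ⟨hs n, ?_⟩⟩
  simpa only [Function.iterate_succ_apply'] using hr _ (hs n)

lemma pow_mul_le_of_forall_mul_le_succ {lam : ℕ → ℝ} (h : ∀ n, 5 * lam n ≤ lam (n + 1)) (n : ℕ) :
    5 ^ n * lam 0 ≤ lam n := by
  induction n with
  | zero => simp
  | succ n ih =>
    rw [pow_succ']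
    linarith [h n]

theorem exists_isWave_seq_tendsto_residual (ν : ℝ) {γ a : ℝ} (ha : 1 / 2 < a) (ha' : a < 2 / 3)
    (haγ : a < 2 - γ) (M : ℝ) :
    ∃ (lam : ℕ → ℝ) (w : ℕ → Z2 →₀ ℝ), M ≤ lam 0 ∧ 0 < lam 0 ∧
      (∀ n, 5 * lam n ≤ lam (n + 1)) ∧ (∀ n, IsWave a (lam n) (w n)) ∧
      Tendsto (fun n => l1Norm (sqgResidual ν γ (∑ i ∈ Finset.range n, w i))) atTop (nhds 0) := by
  obtain ⟨b, ε, K, h⟩ := exists_admissibleExponents ha ha' haγ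
  set η := b * (2 * a - 1 + ε)
  have hη : 0 < η := mul_pos (by linarith [h.one_lt]) (by linarith [h.eps_pos])
  obtain ⟨L₀, hL₀⟩ := eventually_atTop.1 (h.eventually_exists_isWave ν ha (by linarith))
  set L := max L₀ (max M 1)
  have hL : 1 ≤ L := (le_max_right _ _).trans (le_max_right _ _)
  obtain ⟨s, hs0, hs⟩ := exists_seq_of_forall_exists
    (p := fun s : ℝ × (Z2 →₀ ℝ) => L ≤ s.1 ∧ IsApproxSolution ν γ a η s.1 s.2)
    (r := fun s s' => 5 * s.1 ≤ s'.1 ∧ IsWave a s'.1 (s'.2 - s.2)) (x₀ := (L, 0))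
    ⟨le_rfl, .zero ν γ a η (by linarith)⟩ fun s hs => by
      obtain ⟨X, w, hX, hw, hfw⟩ := hL₀ s.1 ((le_max_left _ _).trans hs.1) s.2 hs.2
      exact ⟨(X, s.2 + w), ⟨by linarith [hs.1], hfw⟩, hX, by rwa [add_sub_cancel_left]⟩
  have hLs : ∀ n, L ≤ (s n).1 := fun n => (hs n).1.1
  refine ⟨fun n => (s (n + 1)).1, fun n => (s (n + 1)).2 - (s n).2,
    ((le_max_left M 1).trans (le_max_right _ _)).trans (hLs 1), by linarith [hLs 1],
    fun n => (hs (n + 1)).2.1, fun n => (hs n).2.2, ?_⟩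
  have htop : Tendsto (fun n => (s n).1) atTop atTop := by
    refine tendsto_atTop_mono (pow_mul_le_of_forall_mul_le_succ fun n => (hs n).2.1) ?_
    exact (tendsto_pow_atTop_atTop_of_one_lt (by norm_num)).atTop_mul_const (by linarith [hLs 0])
  refine squeeze_zero (fun n => apply_nonneg _ _) (fun n => ?_)
    ((tendsto_rpow_neg_atTop hη).comp htop)
  rw [Finset.sum_range_sub (fun n => (s n).2), hs0, sub_zero]
  exact (hs n).1.2.l1Norm_residual_le

/-! ### Passage to the limit -/

section Series

variable {ι : Type*} {w : ℕ → ι →₀ ℝ}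

lemma hasSum_l1Norm (f : ι →₀ ℝ) : HasSum (fun k => |f k|) (l1Norm f) :=
  hasSum_sum_of_ne_finset_zero fun k hk => by rw [Finsupp.notMem_support_iff.1 hk, abs_zero]

lemma summable_mul_tsum_apply {u : ι → ℝ} (h : Summable fun n => l1Norm (fourierMul u (w n))) :
    Summable fun k => u k * ∑' n, w n k := by
  have hprod : Summable fun p : ℕ × ι => |fourierMul u (w p.1) p.2| := by
    refine (summable_prod_of_nonneg fun p => abs_nonneg _).2
      ⟨fun n => (hasSum_l1Norm (fourierMul u (w n))).summable, ?_⟩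
    simpa only [(hasSum_l1Norm (fourierMul u (w _))).tsum_eq] using h
  have hswap : Summable fun p : ι × ℕ => u p.1 * w p.2 p.1 :=
    hprod.of_abs.prod_symm.congr fun p => fourierMul_apply _ _ _
  simpa only [tsum_mul_left] using hswap.prod

section DisjointSupport

variable (hw : Pairwise fun i j => ∀ k, w i k = 0 ∨ w j k = 0)

include hw

lemma hasSum_apply_of_ne_zero {n : ℕ} {k : ι} (hk : w n k ≠ 0) :
    HasSum (fun i => w i k) (w n k) :=
  hasSum_single n fun _ hi => (hw hi k).resolve_right hk

lemma hasSum_apply (k : ι) : HasSum (fun n => w n k) (∑' n, w n k) := by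
  by_cases h : ∃ n, w n k ≠ 0
  · obtain ⟨n, hn⟩ := h
    exact (hasSum_apply_of_ne_zero hw hn).summable.hasSum
  · push Not at h
    simp only [h, tsum_zero, hasSum_zero]

lemma abs_sum_range_apply_le (n : ℕ) (k : ι) :
    |∑ i ∈ Finset.range n, w i k| ≤ |∑' i, w i k| := by
  by_cases h : ∃ j ∈ Finset.range n, w j k ≠ 0
  · obtain ⟨j, hj, hjk⟩ := h
    rw [(hasSum_apply_of_ne_zero hw hjk).tsum_eq,
      Finset.sum_eq_single_of_mem j hj fun i _ hi => (hw hi k).resolve_right hjk]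
  · push Not at h
    rw [Finset.sum_eq_zero h, abs_zero]
    exact abs_nonneg _

end DisjointSupport

lemma tendsto_bilinMul_apply [AddCommGroup ι] {S : ι → ι → ℝ} {u : ι → ℝ} {F : ℕ → ι →₀ ℝ}
    {f : ι → ℝ} (hu : ∀ k, 0 ≤ u k) (hS : ∀ k m, |S k m| ≤ u k * u m)
    (hf : Summable fun k => u k * |f k|) (hF : ∀ k, Tendsto (fun n => F n k) atTop (nhds (f k)))
    (hFf : ∀ n k, |F n k| ≤ |f k|) (m : ι) :
    Tendsto (fun n => bilinMul S (F n) (F n) m) atTop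
      (nhds (∑' k, S k (m - k) * f k * f (m - k))) := by
  simp only [bilinMul_apply_tsum]
  have hnn : ∀ k, 0 ≤ u k * |f k| := fun k => mul_nonneg (hu k) (abs_nonneg _)
  refine tendsto_tsum_of_dominated_convergence
    (bound := fun k => u k * |f k| * ∑' k, u k * |f k|) (hf.mul_right _)
    (fun k => ((hF k).const_mul _).mul (hF (m - k))) (Eventually.of_forall fun n k => ?_)
  rw [Real.norm_eq_abs, abs_mul, abs_mul]
  calc |S k (m - k)| * |F n k| * |F n (m - k)|
      ≤ u k * u (m - k) * |f k| * |f (m - k)| := by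
        have huu := mul_nonneg (hu k) (hu (m - k))
        exact mul_le_mul (mul_le_mul (hS _ _) (hFf n k) (abs_nonneg _) huu) (hFf n _)
          (abs_nonneg _) (mul_nonneg huu (abs_nonneg _))
    _ = u k * |f k| * (u (m - k) * |f (m - k)|) := by ring
    _ ≤ u k * |f k| * ∑' k, u k * |f k| :=
        mul_le_mul_of_nonneg_left (hf.le_tsum _ fun j _ => hnn j) (hnn k)

end Series

/-- Real Fourier coefficients `f` of `Λ⁻¹θ` for an even stationary weak solution `θ` of SQG,
with enough decay for the equation to hold mode by mode. -/
structure IsStationaryProfile (ν γ : ℝ) (f : Z2 → ℝ) : Prop where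
  apply_neg : ∀ k, f (-k) = f k
  apply_zero : f 0 = 0
  summable_sqrt : Summable fun k => √(knorm k) * |f k|
  equation : ∀ m, ∑' k, sqgSymbol k (m - k) * f k * f (m - k) + ν * knorm m ^ (γ - 1) * f m = 0

section WaveSequence

variable {a : ℝ} {lam : ℕ → ℝ} {w : ℕ → Z2 →₀ ℝ} (h0 : 0 < lam 0)
  (h : ∀ n, 5 * lam n ≤ lam (n + 1))

include h0 h

lemma pos_of_forall_mul_le_succ (n : ℕ) : 0 < lam n :=
  (by positivity : 0 < 5 ^ n * lam 0).trans_le (pow_mul_le_of_forall_mul_le_succ h n)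

lemma monotone_of_forall_mul_le_succ : Monotone lam :=
  monotone_nat_of_le_succ fun n => by linarith [h n, pos_of_forall_mul_le_succ h0 h n]

lemma summable_rpow_of_forall_mul_le_succ {s : ℝ} (hs : s < 0) : Summable fun n => lam n ^ s := by
  refine Summable.of_nonneg_of_le
    (fun n => Real.rpow_nonneg (pos_of_forall_mul_le_succ h0 h n).le s) (fun n => ?_)
    ((summable_geometric_of_lt_one (by positivity) (Real.rpow_lt_one_of_one_lt_of_neg
      (by norm_num : (1 : ℝ) < 5) hs)).mul_right (lam 0 ^ s))
  refine (Real.rpow_le_rpow_of_nonpos (by positivity)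
    (pow_mul_le_of_forall_mul_le_succ h n) hs.le).trans_eq ?_
  rw [Real.mul_rpow (by positivity) h0.le, ← Real.rpow_natCast, ← Real.rpow_mul (by norm_num),
    ← Real.rpow_mul_natCast (by norm_num), mul_comm s]

variable (hw : ∀ n, IsWave a (lam n) (w n))

include hw

lemma pairwise_disjoint_of_isWave : Pairwise fun i j => ∀ k, w i k = 0 ∨ w j k = 0 := by
  have hlt : ∀ i j, i < j → ∀ k, w i k = 0 ∨ w j k = 0 := fun i j hij k => by
    by_contra! hk
    have hi := abs_le.1 ((hw i).abs_knorm_sub_le k hk.1)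
    have hj := abs_le.1 ((hw j).abs_knorm_sub_le k hk.2)
    linarith [h i, monotone_of_forall_mul_le_succ h0 h (Nat.succ_le_of_lt hij),
      pos_of_forall_mul_le_succ h0 h i]
  exact fun i j hij k => hij.lt_or_gt.elim (hlt i j · k) fun hji => (hlt j i hji k).symm

lemma summable_knorm_rpow_mul_abs_tsum {s : ℝ} (hs : s < a) :
    Summable fun k => knorm k ^ s * |∑' n, w n k| := by
  have hsum := (summable_rpow_of_forall_mul_le_succ h0 h (sub_neg.2 hs)).mul_left (8 * 2 ^ |s|)
  have hl1 : Summable fun n => l1Norm (fourierMul (fun k => knorm k ^ s) (w n)) :=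
    hsum.of_nonneg_of_le (fun n => apply_nonneg _ _) fun n =>
      (hw n).l1Norm_rpow_le (pos_of_forall_mul_le_succ h0 h n) s
  refine (summable_mul_tsum_apply hl1).abs.congr fun k => ?_
  rw [abs_mul, abs_of_nonneg (Real.rpow_nonneg (knorm_nonneg k) s)]

lemma tsum_apply_eq_zero_of_knorm_lt {k : Z2} (hk : 2 * knorm k < lam 0) :
    ∑' n, w n k = 0 := by
  suffices hzero : ∀ n, w n k = 0 by simp only [hzero, tsum_zero]
  intro n
  by_contra hn
  linarith [(abs_le.1 ((hw n).abs_knorm_sub_le k hn)).1,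
    monotone_of_forall_mul_le_succ h0 h n.zero_le]

lemma isStationaryProfile_tsum {ν γ : ℝ} (ha : 1 / 2 < a)
    (hres : Tendsto (fun n => l1Norm (sqgResidual ν γ (∑ i ∈ Finset.range n, w i))) atTop
      (nhds 0)) : IsStationaryProfile ν γ fun k => ∑' n, w n k where
  apply_neg k := tsum_congr fun n => (hw n).even k
  apply_zero := tsum_apply_eq_zero_of_knorm_lt h0 h hw (by simpa only [knorm_zero, mul_zero])
  summable_sqrt := by
    simpa only [Real.sqrt_eq_rpow] using summable_knorm_rpow_mul_abs_tsum h0 h hw ha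
  equation m := by
    have hdisj := pairwise_disjoint_of_isWave h0 h hw
    set F : ℕ → Z2 →₀ ℝ := fun n => ∑ i ∈ Finset.range n, w i
    have hF_apply : ∀ n k, F n k = ∑ i ∈ Finset.range n, w i k := fun n k =>
      Finsupp.finsetSum_apply _ _ _
    have hF : ∀ k, Tendsto (fun n => F n k) atTop (nhds (∑' n, w n k)) := fun k => by
      simpa only [hF_apply] using (hasSum_apply hdisj k).tendsto_sum_nat
    have hquad := tendsto_bilinMul_apply (fun k => Real.sqrt_nonneg (knorm k))
      abs_sqgSymbol_le_sqrt_mul_sqrt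
      (by simpa only [Real.sqrt_eq_rpow] using summable_knorm_rpow_mul_abs_tsum h0 h hw ha) hF
      (fun n k => hF_apply n k ▸ abs_sum_range_apply_le hdisj n k) m
    have hlim := hquad.add ((hF m).const_mul (ν * knorm m ^ (γ - 1)))
    have hzero : Tendsto (fun n => sqgResidual ν γ (F n) m) atTop (nhds 0) :=
      squeeze_zero_norm (fun n => abs_apply_le_l1Norm _ m) hres
    exact tendsto_nhds_unique hlim (hzero.congr fun n => by
      rw [sqgResidual, Finsupp.add_apply, fourierMul_apply])

end WaveSequence

theorem exists_isStationaryProfile (ν : ℝ) {γ a : ℝ} (ha : 1 / 2 < a) (ha' : a < 2 / 3)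
    (haγ : a < 2 - γ) (M : ℝ) :
    ∃ f, IsStationaryProfile ν γ f ∧ (∃ k, f k ≠ 0) ∧ (∀ k, knorm k < M → f k = 0) ∧
      ∀ s < a, Summable fun k => knorm k ^ s * |f k| := by
  obtain ⟨lam, w, hM, h0, h, hw, hres⟩ := exists_isWave_seq_tendsto_residual ν ha ha' haγ (2 * M)
  refine ⟨_, isStationaryProfile_tsum h0 h hw ha hres, ?_,
    fun k hk => tsum_apply_eq_zero_of_knorm_lt h0 h hw (by linarith),
    fun s hs => summable_knorm_rpow_mul_abs_tsum h0 h hw hs⟩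
  obtain ⟨k, hk⟩ := Finsupp.ne_iff.1 (hw 0).ne_zero
  exact ⟨k, (hasSum_apply_of_ne_zero (pairwise_disjoint_of_isWave h0 h hw) hk).tsum_eq.trans_ne hk⟩

/-! ### Fourier series on the torus -/

lemma abs_fst_le_knorm (k : Z2) : |(k.1 : ℝ)| ≤ knorm k :=
  Real.abs_le_sqrt (le_add_of_nonneg_right (sq_nonneg _))

lemma abs_snd_le_knorm (k : Z2) : |(k.2 : ℝ)| ≤ knorm k :=
  Real.abs_le_sqrt (le_add_of_nonneg_left (sq_nonneg _))

lemma dotZ_neg_left (k : Z2) (x : ℝ × ℝ) : dotZ (-k) x = -dotZ k x := by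
  simp only [dotZ, Prod.fst_neg, Prod.snd_neg, Int.cast_neg]
  ring

lemma hasFDerivAt_dotZ (k : Z2) (x : ℝ × ℝ) :
    HasFDerivAt (dotZ k)
      ((k.1 : ℝ) • ContinuousLinearMap.fst ℝ ℝ ℝ + (k.2 : ℝ) • ContinuousLinearMap.snd ℝ ℝ ℝ) x :=
  (hasFDerivAt_fst.const_mul _).add (hasFDerivAt_snd.const_mul _)

lemma abs_dotZ_sub_dotZ_le (k : Z2) (x y : ℝ × ℝ) :
    |dotZ k x - dotZ k y| ≤ 2 * (knorm k * dist x y) := by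
  have hx : |x.1 - y.1| ≤ dist x y := le_max_left _ _
  have hy : |x.2 - y.2| ≤ dist x y := le_max_right _ _
  calc |dotZ k x - dotZ k y| = |(k.1 : ℝ) * (x.1 - y.1) + k.2 * (x.2 - y.2)| := by
        simp only [dotZ]
        ring_nf
    _ ≤ |(k.1 : ℝ)| * |x.1 - y.1| + |(k.2 : ℝ)| * |x.2 - y.2| := by
        simpa only [abs_mul] using abs_add_le ((k.1 : ℝ) * (x.1 - y.1)) (k.2 * (x.2 - y.2))
    _ ≤ knorm k * dist x y + knorm k * dist x y :=
        add_le_add (mul_le_mul (abs_fst_le_knorm k) hx (abs_nonneg _) (knorm_nonneg k))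
          (mul_le_mul (abs_snd_le_knorm k) hy (abs_nonneg _) (knorm_nonneg k))
    _ = 2 * (knorm k * dist x y) := by ring

lemma isCompact_Q2 : IsCompact Q2 := isCompact_Icc

lemma volume_real_Q2 : volume.real Q2 = (2 * Real.pi) ^ 2 := by
  have hpi : -Real.pi ≤ Real.pi := neg_le_self Real.pi_pos.le
  rw [Q2, ← Set.Icc_prod_Icc, Measure.volume_eq_prod, measureReal_prod_prod,
    Real.volume_real_Icc_of_le hpi]
  ring

/-- The character `x ↦ exp (i k ⋅ x)` of the torus. -/
def planeWave (k : Z2) (x : ℝ × ℝ) : ℂ := cexp (I * (dotZ k x : ℝ))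

lemma norm_planeWave (k : Z2) (x : ℝ × ℝ) : ‖planeWave k x‖ = 1 := by
  rw [planeWave, mul_comm, norm_exp_ofReal_mul_I]

lemma planeWave_zero (x : ℝ × ℝ) : planeWave 0 x = 1 := by simp [planeWave, dotZ]

lemma planeWave_add (k m : Z2) (x : ℝ × ℝ) :
    planeWave (k + m) x = planeWave k x * planeWave m x := by
  simp only [planeWave, ← Complex.exp_add, dotZ, Prod.fst_add, Prod.snd_add]
  push_cast
  ring_nf

lemma planeWave_neg (k : Z2) (x : ℝ × ℝ) : planeWave (-k) x = cexp (-I * (dotZ k x : ℝ)) := by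
  rw [planeWave, dotZ_neg_left, ofReal_neg, mul_neg, neg_mul]

lemma conj_planeWave (k : Z2) (x : ℝ × ℝ) :
    (starRingEnd ℂ) (planeWave k x) = planeWave (-k) x := by
  rw [planeWave_neg, planeWave, ← Complex.exp_conj, map_mul, conj_I, conj_ofReal]

lemma contDiff_planeWave (k : Z2) {n : WithTop ℕ∞} : ContDiff ℝ n (planeWave k) := by
  have hdot : ContDiff ℝ n (dotZ k) := by
    unfold dotZ
    fun_prop
  exact (contDiff_const.mul (ofRealCLM.contDiff.comp hdot)).cexp

lemma periodic2_planeWave (k : Z2) : Periodic2 (planeWave k) := by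
  intro x
  have hshift : ∀ (n : ℤ) (y : ℝ × ℝ), dotZ k y = dotZ k x + n * (2 * Real.pi) →
      planeWave k y = planeWave k x := fun n y hy => by
    rw [planeWave, planeWave, hy, ← Complex.exp_periodic.int_mul n (I * (dotZ k x : ℝ))]
    push_cast
    ring_nf
  constructor
  · exact hshift k.1 _ (by simp only [dotZ]; ring)
  · exact hshift k.2 _ (by simp only [dotZ]; ring)

lemma dirD_planeWave (k : Z2) (v x : ℝ × ℝ) :
    dirD v (planeWave k) x = I * dotZ k v * planeWave k x := by
  have hexp := ((ofRealCLM.hasFDerivAt.comp x (hasFDerivAt_dotZ k x)).const_mul I).cexp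
  rw [dirD, HasFDerivAt.fderiv (f := planeWave k) hexp]
  simp only [Function.comp_apply, dotZ, ofRealCLM_apply, ofReal_add, ofReal_mul, ofReal_intCast,
    ContinuousLinearMap.comp_add, ContinuousLinearMap.comp_smulₛₗ, map_intCast, smul_add, add_apply,
    smul_apply, ContinuousLinearMap.comp_apply, ContinuousLinearMap.coe_fst', real_smul,
    smul_eq_mul, ContinuousLinearMap.coe_snd', planeWave]
  ring

lemma continuous_dirD {h : ℝ × ℝ → ℂ} (hh : ContDiff ℝ 1 h) (v : ℝ × ℝ) :
    Continuous (dirD v h) :=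
  (hh.continuous_fderiv one_ne_zero).clm_apply continuous_const

/-- Opposite boundary terms in the divergence theorem cancel. -/
lemma integral_dirD_eq_zero {h : ℝ × ℝ → ℂ} (hh : ContDiff ℝ 1 h) (hp : Periodic2 h)
    (v : ℝ × ℝ) : ∫ x in Q2, dirD v h x = 0 := by
  have hdiff : ∀ (c : ℝ) x, HasFDerivAt (fun x => c • h x) (c • fderiv ℝ h x) x := fun c x =>
    ((hh.differentiable one_ne_zero x).hasFDerivAt).const_smul c
  have hcontOn : ∀ (c : ℝ) s, ContinuousOn (fun x => c • h x) s := fun c s =>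
    (hh.continuous.const_smul c).continuousOn
  have hsplit : ∀ x, dirD v h x = (v.1 • fderiv ℝ h x) (1, 0) + (v.2 • fderiv ℝ h x) (0, 1) := by
    intro x
    rw [smul_apply, smul_apply, ← map_smul, ← map_smul, ← map_add, dirD]
    simp
  have hshift : Real.pi = -Real.pi + 2 * Real.pi := by ring
  have hfst : ∀ y, h (Real.pi, y) = h (-Real.pi, y) := fun y => by
    nth_rw 1 [hshift]
    exact (hp (-Real.pi, y)).1
  have hsnd : ∀ x, h (x, Real.pi) = h (x, -Real.pi) := fun x => by
    nth_rw 1 [hshift]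
    exact (hp (x, -Real.pi)).2
  have hcont := continuous_dirD hh v
  rw [funext hsplit] at hcont ⊢
  rw [Q2, integral_divergence_prod_Icc_of_hasFDerivAt_of_le (fun x => v.1 • h x)
    (fun x => v.2 • h x) _ _ _ _ ⟨neg_le_self Real.pi_pos.le, neg_le_self Real.pi_pos.le⟩
    (hcontOn v.1 _) (hcontOn v.2 _)
    (fun x _ => hdiff _ x) (fun x _ => hdiff _ x)
    (hcont.continuousOn.integrableOn_compact isCompact_Icc)]
  simp only [hfst, hsnd, sub_self, zero_add]

lemma integral_planeWave (k : Z2) :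
    ∫ x in Q2, planeWave k x = if k = 0 then ((2 * Real.pi) ^ 2 : ℂ) else 0 := by
  split_ifs with hk
  · subst hk
    simp only [planeWave_zero, setIntegral_const, volume_real_Q2]
    simp
  · have h := integral_dirD_eq_zero (contDiff_planeWave k) (periodic2_planeWave k) (toR k)
    have hdot : dotZ k (toR k) = knorm k ^ 2 := by
      rw [knorm_sq, dotZ, toR, sq, sq]
    simp only [dirD_planeWave, integral_const_mul, hdot] at h
    have hne : I * ((knorm k ^ 2 : ℝ) : ℂ) ≠ 0 :=
      mul_ne_zero I_ne_zero (ofReal_ne_zero.2 (pow_ne_zero 2 (knorm_pos hk).ne'))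
    exact (mul_eq_zero.1 h).resolve_left hne

lemma fCoeff_eq_integral_mul_planeWave (f : ℝ × ℝ → ℂ) (k : Z2) :
    fCoeff f k = (1 / (2 * Real.pi) ^ 2 : ℂ) * ∫ x in Q2, f x * planeWave (-k) x := by
  simp only [planeWave_neg, fCoeff]

lemma norm_fCoeff_le {f : ℝ × ℝ → ℂ} {C : ℝ} (hC : ∀ x ∈ Q2, ‖f x‖ ≤ C) (k : Z2) :
    ‖fCoeff f k‖ ≤ C := by
  have hpi : 0 < (2 * Real.pi) ^ 2 := by positivity
  have hint : ‖∫ x in Q2, f x * planeWave (-k) x‖ ≤ C * (2 * Real.pi) ^ 2 := by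
    rw [← volume_real_Q2]
    refine norm_setIntegral_le_of_norm_le_const isCompact_Q2.measure_lt_top fun x hx => ?_
    rw [norm_mul, norm_planeWave, mul_one]
    exact hC x hx
  have hconst : ‖(1 / (2 * Real.pi) ^ 2 : ℂ)‖ = 1 / (2 * Real.pi) ^ 2 := by
    simp [abs_of_pos Real.pi_pos]
  rw [fCoeff_eq_integral_mul_planeWave, norm_mul, hconst, one_div, inv_mul_le_iff₀ hpi, mul_comm]
  exact hint

lemma fCoeff_dirD {ψ : ℝ × ℝ → ℂ} (hψ : ContDiff ℝ 1 ψ) (hp : Periodic2 ψ) (v : ℝ × ℝ) (k : Z2) :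
    fCoeff (dirD v ψ) k = I * dotZ k v * fCoeff ψ k := by
  have hleibniz : ∀ x, dirD v (fun x => ψ x * planeWave (-k) x) x
      = dirD v ψ x * planeWave (-k) x - I * dotZ k v * (ψ x * planeWave (-k) x) := fun x => by
    have hwave := dirD_planeWave (-k) v x
    rw [dotZ_neg_left] at hwave
    simp only [dirD] at hwave ⊢
    rw [fderiv_fun_mul (hψ.differentiable one_ne_zero x)
      ((contDiff_planeWave (-k)).differentiable one_ne_zero x)]
    simp only [add_apply, smul_apply, smul_eq_mul, hwave, ofReal_neg]
    ring
  have hzero := integral_dirD_eq_zero (hψ.mul (contDiff_planeWave (-k)))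
    (fun x => by simp only [(hp x).1, (hp x).2, (periodic2_planeWave (-k) x).1,
      (periodic2_planeWave (-k) x).2, and_self]) v
  have hwave : Continuous (planeWave (-k)) := (contDiff_planeWave (-k) (n := 0)).continuous
  simp only [hleibniz] at hzero
  have hintegrable : ∀ g : ℝ × ℝ → ℂ, Continuous g →
      IntegrableOn (fun x => g x * planeWave (-k) x) Q2 := fun g hg =>
    (hg.mul hwave).continuousOn.integrableOn_compact isCompact_Q2
  rw [integral_sub (hintegrable _ (continuous_dirD hψ v))
    ((hintegrable _ hψ.continuous).const_mul _), integral_const_mul, sub_eq_zero] at hzero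
  rw [fCoeff_eq_integral_mul_planeWave, fCoeff_eq_integral_mul_planeWave, hzero]
  ring

lemma periodic2_dirD {ψ : ℝ × ℝ → ℂ} (hp : Periodic2 ψ) (v : ℝ × ℝ) : Periodic2 (dirD v ψ) := by
  have hshift : ∀ a : ℝ × ℝ, (∀ x, ψ (x + a) = ψ x) → ∀ x, dirD v ψ (x + a) = dirD v ψ x :=
    fun a ha x => by rw [dirD, ← fderiv_comp_add_right, funext ha, dirD]
  refine fun x => ⟨?_, ?_⟩
  · simpa [Prod.add_def] using hshift (2 * Real.pi, 0)
      (fun y => by simpa [Prod.add_def] using (hp y).1) x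
  · simpa [Prod.add_def] using hshift (0, 2 * Real.pi)
      (fun y => by simpa [Prod.add_def] using (hp y).2) x

lemma exists_sq_dotZ_mul_norm_fCoeff_le {ψ : ℝ × ℝ → ℂ} (hψ : ContDiff ℝ 2 ψ) (hp : Periodic2 ψ)
    (v : ℝ × ℝ) : ∃ C, ∀ k, dotZ k v ^ 2 * ‖fCoeff ψ k‖ ≤ C := by
  have hdψ : ContDiff ℝ 1 (dirD v ψ) := (hψ.fderiv_right (by norm_num)).clm_apply contDiff_const
  obtain ⟨C, hC⟩ :=
    isCompact_Q2.exists_bound_of_continuousOn (continuous_dirD hdψ v).continuousOn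
  refine ⟨C, fun k => (le_of_eq ?_).trans (norm_fCoeff_le hC k)⟩
  rw [fCoeff_dirD hdψ (periodic2_dirD hp v), fCoeff_dirD (hψ.of_le one_le_two) hp, ← mul_assoc,
    norm_mul, norm_mul, norm_mul, norm_I, one_mul, norm_real, Real.norm_eq_abs, abs_mul_abs_self,
    sq]

lemma exists_knorm_sq_mul_norm_fCoeff_le {ψ : ℝ × ℝ → ℂ} (hψ : ContDiff ℝ 2 ψ)
    (hp : Periodic2 ψ) : ∃ C, ∀ k, knorm k ^ 2 * ‖fCoeff ψ k‖ ≤ C := by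
  obtain ⟨C₁, h₁⟩ := exists_sq_dotZ_mul_norm_fCoeff_le hψ hp (1, 0)
  obtain ⟨C₂, h₂⟩ := exists_sq_dotZ_mul_norm_fCoeff_le hψ hp (0, 1)
  refine ⟨C₁ + C₂, fun k => ?_⟩
  have hk₁ := h₁ k
  have hk₂ := h₂ k
  simp only [dotZ, mul_one, mul_zero, add_zero, zero_add] at hk₁ hk₂
  rw [knorm_sq, add_mul]
  exact add_le_add hk₁ hk₂

/-- The function on the torus with Fourier coefficients `c`, for absolutely summable `c`. -/
def fourierSeries (c : Z2 → ℂ) (x : ℝ × ℝ) : ℂ := ∑' k, c k * planeWave k x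

lemma norm_mul_planeWave (z : ℂ) (k : Z2) (x : ℝ × ℝ) : ‖z * planeWave k x‖ = ‖z‖ := by
  rw [norm_mul, norm_planeWave, mul_one]

section FourierSeries

variable {c : Z2 → ℂ}

lemma periodic2_fourierSeries : Periodic2 (fourierSeries c) := fun x => by
  simp only [fourierSeries, (periodic2_planeWave _ x).1, (periodic2_planeWave _ x).2, and_self]

lemma realValued_fourierSeries (hc : ∀ k, c (-k) = (starRingEnd ℂ) (c k)) :
    RealValued (fourierSeries c) := by
  intro x
  rw [← conj_eq_iff_im, fourierSeries, conj_tsum, ← (Equiv.neg Z2).tsum_eq]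
  simp only [Equiv.neg_apply, map_mul, conj_planeWave, hc, conj_conj, neg_neg]

variable (hc : Summable fun k => ‖c k‖)

include hc

lemma continuous_fourierSeries : Continuous (fourierSeries c) :=
  continuous_tsum (fun k => continuous_const.mul (contDiff_planeWave k (n := 0)).continuous) hc
    fun k x => (norm_mul_planeWave (c k) k x).le

lemma fCoeff_fourierSeries (k : Z2) : fCoeff (fourierSeries c) k = c k := by
  have hpi : (Real.pi : ℂ) ≠ 0 := ofReal_ne_zero.2 Real.pi_ne_zero
  have hmul : ∀ x, fourierSeries c x * planeWave (-k) x = ∑' j, c j * planeWave (j - k) x :=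
    fun x => by
      simp only [fourierSeries, ← tsum_mul_right, sub_eq_add_neg, planeWave_add, mul_assoc]
  have hintegrable : ∀ j, IntegrableOn (fun x => c j * planeWave (j - k) x) Q2 := fun j =>
    (contDiff_planeWave _ (n := 0)).continuous.const_mul _ |>.continuousOn.integrableOn_compact
      isCompact_Q2
  have hsummable : Summable fun j => ∫ x in Q2, ‖c j * planeWave (j - k) x‖ := by
    simp only [norm_mul_planeWave, setIntegral_const, smul_eq_mul]
    exact hc.mul_left _
  have hintegral : ∀ j, ∫ x in Q2, c j * planeWave (j - k) x
      = if j = k then c k * (2 * Real.pi) ^ 2 else 0 := fun j => by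
    rw [integral_const_mul, integral_planeWave, mul_ite, mul_zero]
    split_ifs with h₁ h₂ h₂
    · rw [h₂]
    · exact absurd (sub_eq_zero.1 h₁) h₂
    · exact absurd (sub_eq_zero.2 h₂) h₁
    · rfl
  rw [fCoeff_eq_integral_mul_planeWave]
  simp only [hmul]
  rw [← integral_tsum_of_summable_integral_norm hintegrable hsummable]
  simp only [hintegral, tsum_ite_eq]
  field_simp

end FourierSeries

lemma norm_planeWave_sub_le (k : Z2) (x y : ℝ × ℝ) {α : ℝ} (hα0 : 0 ≤ α) (hα1 : α ≤ 1) :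
    ‖planeWave k x - planeWave k y‖ ≤ 2 * (knorm k ^ α * dist x y ^ α) := by
  have hle_two : ‖planeWave k x - planeWave k y‖ ≤ 2 := by
    simpa only [norm_planeWave, one_add_one_eq_two] using
      norm_sub_le (planeWave k x) (planeWave k y)
  have hle_dist : ‖planeWave k x - planeWave k y‖ ≤ 2 * (knorm k * dist x y) := by
    refine le_trans ?_ (abs_dotZ_sub_dotZ_le k x y)
    have hfactor : planeWave k x - planeWave k y
        = planeWave k y * (cexp (I * ((dotZ k x - dotZ k y : ℝ) : ℂ)) - 1) := by
      rw [mul_sub, planeWave, planeWave, ← Complex.exp_add, mul_one]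
      push_cast
      ring_nf
    rw [hfactor, norm_mul, norm_planeWave, one_mul]
    exact Real.norm_exp_I_mul_ofReal_sub_one_le
  calc ‖planeWave k x - planeWave k y‖
      = ‖planeWave k x - planeWave k y‖ ^ (1 - α) * ‖planeWave k x - planeWave k y‖ ^ α := by
        rw [← Real.rpow_add' (norm_nonneg _) (by simp), sub_add_cancel, Real.rpow_one]
    _ ≤ 2 ^ (1 - α) * (2 * (knorm k * dist x y)) ^ α := by
        have := knorm_nonneg k
        gcongr
    _ = 2 * (knorm k ^ α * dist x y ^ α) := by
        rw [Real.mul_rpow two_pos.le (mul_nonneg (knorm_nonneg k) dist_nonneg),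
          Real.mul_rpow (knorm_nonneg k) dist_nonneg, ← mul_assoc, ← Real.rpow_add two_pos,
          sub_add_cancel, Real.rpow_one]

lemma norm_fourierSeries_sub_le {c : Z2 → ℂ} (hc : Summable fun k => ‖c k‖) {α : ℝ} (hα0 : 0 ≤ α)
    (hα1 : α ≤ 1) (hcα : Summable fun k => knorm k ^ α * ‖c k‖) (x y : ℝ × ℝ) :
    ‖fourierSeries c x - fourierSeries c y‖
      ≤ (2 * ∑' k, knorm k ^ α * ‖c k‖) * dist x y ^ α := by
  have hsum : ∀ x, Summable fun k => c k * planeWave k x := fun x =>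
    .of_norm (by simpa only [norm_mul_planeWave] using hc)
  rw [fourierSeries, fourierSeries, ← (hsum x).tsum_sub (hsum y), mul_right_comm]
  refine tsum_of_norm_bounded (hcα.hasSum.mul_left _) fun k => ?_
  rw [← mul_sub, norm_mul]
  exact (mul_le_mul_of_nonneg_left (norm_planeWave_sub_le k x y hα0 hα1) (norm_nonneg _)).trans_eq
    (by ring)

/-! ### The weak formulation -/

/-- Fourier coefficients of `Λ g`, where `g` has the real Fourier coefficients `f`. -/
def lamCoeff (f : Z2 → ℝ) (k : Z2) : ℂ := ((knorm k * f k : ℝ) : ℂ)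

lemma conj_lamCoeff (f : Z2 → ℝ) (k : Z2) : (starRingEnd ℂ) (lamCoeff f k) = lamCoeff f k :=
  conj_ofReal _

lemma norm_lamCoeff (f : Z2 → ℝ) (k : Z2) : ‖lamCoeff f k‖ = knorm k * |f k| := by
  rw [lamCoeff, norm_real, Real.norm_eq_abs, abs_mul, abs_of_nonneg (knorm_nonneg k)]

lemma rieszSym_mul_knorm (j : Fin 2) (k : Z2) :
    rieszSym j k * knorm k = I * ((if j = 0 then (k.1 : ℝ) else (k.2 : ℝ)) : ℂ) := by
  rcases eq_or_ne k 0 with rfl | hk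
  · simp
  · rw [rieszSym, if_neg hk, div_mul_cancel₀ _ (ofReal_ne_zero.2 (knorm_pos hk).ne')]

lemma norm_rieszSym_le_one (j : Fin 2) (k : Z2) : ‖rieszSym j k‖ ≤ 1 := by
  rcases eq_or_ne k 0 with rfl | hk
  · simp [rieszSym]
  · refine le_of_mul_le_mul_right ?_ (knorm_pos hk)
    have h := congrArg norm (rieszSym_mul_knorm j k)
    rw [norm_mul, norm_real, Real.norm_of_nonneg (knorm_nonneg k), norm_mul, norm_I, one_mul] at h
    rw [h, one_mul]
    split_ifs
    · simpa using abs_fst_le_knorm k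
    · simpa using abs_snd_le_knorm k

/-- Symbol of the commutator `[R^⊥, ∇ψ]`: it maps the Fourier coefficients `c` to
`k ↦ ∑ₗ commSymbol k l * ψ̂(k - l) * c l`. -/
def commSymbol (k l : Z2) : ℂ :=
  -((rieszSym 1 k - rieszSym 1 l) * (I * (((k - l).1 : ℝ) : ℂ)))
    + (rieszSym 0 k - rieszSym 0 l) * (I * (((k - l).2 : ℝ) : ℂ))

lemma knorm_sub_sq_mul_sqgSymbol (k l : Z2) :
    2 * knorm (k - l) ^ 2 * sqgSymbol k (-l) = cross k l * (knorm l - knorm k) := by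
  rcases eq_or_ne k l with rfl | h
  · simp
  · have hne : knorm (k - l) ≠ 0 := (knorm_pos (sub_ne_zero.2 h)).ne'
    have hcross : cross k (-l) = -cross k l := by
      simp only [cross, Prod.fst_neg, Prod.snd_neg, Int.cast_neg]
      ring
    rw [sqgSymbol, ← sub_eq_add_neg, knorm_neg, hcross]
    field_simp
    ring

lemma lamCoeff_mul_commSymbol_mul_lamCoeff (f : Z2 → ℝ) (k l : Z2) :
    lamCoeff f k * commSymbol k l * lamCoeff f l
      = ((2 * knorm (k - l) ^ 2 * sqgSymbol k (-l) * f k * f l : ℝ) : ℂ) := by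
  have hk0 := rieszSym_mul_knorm 0 k
  have hk1 := rieszSym_mul_knorm 1 k
  have hl0 := rieszSym_mul_knorm 0 l
  have hl1 := rieszSym_mul_knorm 1 l
  simp only [if_true, one_ne_zero, if_false] at hk0 hk1 hl0 hl1
  rw [knorm_sub_sq_mul_sqgSymbol]
  simp only [lamCoeff, commSymbol, cross, Prod.fst_sub, Prod.snd_sub]
  push_cast at hk0 hk1 hl0 hl1 ⊢
  linear_combination (f k * f l * I * ((k.2 : ℂ) - l.2) * knorm l) * hk0
    - (f k * f l * I * ((k.1 : ℂ) - l.1) * knorm l) * hk1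
    - (f k * f l * I * ((k.2 : ℂ) - l.2) * knorm k) * hl0
    + (f k * f l * I * ((k.1 : ℂ) - l.1) * knorm k) * hl1
    + (f k * f l * (((k.1 : ℂ) * knorm l - l.1 * knorm k) * ((k.2 : ℂ) - l.2)
      - ((k.2 : ℂ) * knorm l - l.2 * knorm k) * ((k.1 : ℂ) - l.1))) * I_sq

lemma norm_le_of_knorm_mul_norm_le {φ : Z2 → ℂ} {C : ℝ} (hφ : ∀ m, knorm m * ‖φ m‖ ≤ C) (m : Z2) :
    ‖φ m‖ ≤ C + ‖φ 0‖ := by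
  rcases eq_or_ne m 0 with rfl | hm
  · have hC := hφ 0
    rw [knorm_zero, zero_mul] at hC
    linarith
  · linarith [hφ m, le_mul_of_one_le_left (norm_nonneg (φ m)) (one_le_knorm hm),
      norm_nonneg (φ 0)]

lemma summable_commCoeff {f : Z2 → ℝ} (hf : Summable fun k => |f k|) {φ : Z2 → ℂ} {C : ℝ}
    (hφ : ∀ m, knorm m * ‖φ m‖ ≤ C) (j : Fin 2) (k : Z2) :
    Summable fun l => (rieszSym j k - rieszSym j l) * φ (k - l) * lamCoeff f l := by
  refine Summable.of_norm_bounded (hf.mul_left (2 * (knorm k * (C + ‖φ 0‖) + C))) fun l => ?_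
  have hriesz : ‖rieszSym j k - rieszSym j l‖ ≤ 2 := by
    linarith [norm_sub_le (rieszSym j k) (rieszSym j l), norm_rieszSym_le_one j k,
      norm_rieszSym_le_one j l]
  have hknorm : knorm l ≤ knorm k + knorm (k - l) := by
    simpa only [sub_sub_cancel] using knorm_sub_le k (k - l)
  have hφl : ‖φ (k - l)‖ * knorm l ≤ knorm k * (C + ‖φ 0‖) + C := by
    calc ‖φ (k - l)‖ * knorm l ≤ ‖φ (k - l)‖ * (knorm k + knorm (k - l)) := by gcongr
      _ = knorm k * ‖φ (k - l)‖ + knorm (k - l) * ‖φ (k - l)‖ := by ring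
      _ ≤ knorm k * (C + ‖φ 0‖) + C :=
        add_le_add (mul_le_mul_of_nonneg_left (norm_le_of_knorm_mul_norm_le hφ _)
          (knorm_nonneg k)) (hφ _)
  rw [norm_mul, norm_mul, norm_lamCoeff]
  calc ‖rieszSym j k - rieszSym j l‖ * ‖φ (k - l)‖ * (knorm l * |f l|)
      = ‖rieszSym j k - rieszSym j l‖ * (‖φ (k - l)‖ * knorm l) * |f l| := by ring
    _ ≤ 2 * (knorm k * (C + ‖φ 0‖) + C) * |f l| := by
        have := mul_nonneg (norm_nonneg (φ (k - l))) (knorm_nonneg l)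
        gcongr

lemma commCoeff_add_commCoeff {f : Z2 → ℝ} (hf : Summable fun k => |f k|) {p : Z2 → ℂ} {C : ℝ}
    (hp : ∀ m, knorm m ^ 2 * ‖p m‖ ≤ C) (k : Z2) :
    -(commCoeff 1 (fun m => I * ((m.1 : ℝ) : ℂ) * p m) (lamCoeff f) k)
        + commCoeff 0 (fun m => I * ((m.2 : ℝ) : ℂ) * p m) (lamCoeff f) k
      = ∑' l, commSymbol k l * p (k - l) * lamCoeff f l := by
  have hgrad : ∀ g : Z2 → ℝ, (∀ m, |g m| ≤ knorm m) →
      ∀ m, knorm m * ‖I * ((g m : ℝ) : ℂ) * p m‖ ≤ C := fun g hg m => by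
    refine le_trans ?_ (hp m)
    rw [norm_mul, norm_mul, norm_I, one_mul, norm_real, Real.norm_eq_abs, ← mul_assoc, sq]
    have := knorm_nonneg m
    gcongr
    exact hg m
  have h₁ := summable_commCoeff hf (hgrad (fun m => m.1) abs_fst_le_knorm) 1 k
  have h₂ := summable_commCoeff hf (hgrad (fun m => m.2) abs_snd_le_knorm) 0 k
  rw [commCoeff, commCoeff, ← tsum_neg, ← h₁.neg.tsum_add h₂]
  refine tsum_congr fun l => ?_
  rw [commSymbol]
  ring

/-- The contribution of the pair of modes `(k, l)` of `lamCoeff f` to the nonlinear side of the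
weak formulation, for a test function with Fourier coefficients `p`. -/
def interaction (f : Z2 → ℝ) (p : Z2 → ℂ) (k l : Z2) : ℂ :=
  ((2 * knorm (k - l) ^ 2 * sqgSymbol k (-l) * f k * f l : ℝ) : ℂ) * (starRingEnd ℂ) (p (k - l))

lemma summable_interaction {f : Z2 → ℝ} (hf : Summable fun k => √(knorm k) * |f k|) {p : Z2 → ℂ}
    {C : ℝ} (hp : ∀ m, knorm m ^ 2 * ‖p m‖ ≤ C) :
    Summable fun q : Z2 × Z2 => interaction f p q.1 q.2 := by
  have hnn : ∀ k, 0 ≤ √(knorm k) * |f k| := fun k => by positivity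
  refine Summable.of_norm_bounded ((hf.mul_of_nonneg hf hnn hnn).mul_left (2 * C)) fun ⟨k, l⟩ => ?_
  have hsymbol : |sqgSymbol k (-l)| ≤ √(knorm k) * √(knorm l) := by
    simpa only [knorm_neg] using abs_sqgSymbol_le_sqrt_mul_sqrt k (-l)
  rw [interaction, norm_mul, RCLike.norm_conj, norm_real, Real.norm_eq_abs, abs_mul, abs_mul,
    abs_mul, abs_of_nonneg (by positivity : 0 ≤ 2 * knorm (k - l) ^ 2)]
  calc 2 * knorm (k - l) ^ 2 * |sqgSymbol k (-l)| * |f k| * |f l| * ‖p (k - l)‖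
      = 2 * (knorm (k - l) ^ 2 * ‖p (k - l)‖) * (|sqgSymbol k (-l)| * |f k| * |f l|) := by ring
    _ ≤ 2 * C * (√(knorm k) * √(knorm l) * |f k| * |f l|) := by
        have hC : 0 ≤ C := le_trans (by positivity) (hp (k - l))
        gcongr
        exact hp (k - l)
    _ = 2 * C * (√(knorm k) * |f k| * (√(knorm l) * |f l|)) := by ring

lemma lamCoeff_mul_conj_commCoeff {f : Z2 → ℝ} (hf : Summable fun k => |f k|) {p : Z2 → ℂ} {C : ℝ}
    (hp : ∀ m, knorm m ^ 2 * ‖p m‖ ≤ C) (k : Z2) :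
    ((knorm k ^ (-(1 / 2) : ℝ) : ℝ) : ℂ) * lamCoeff f k *
        (starRingEnd ℂ) (((knorm k ^ ((1 / 2) : ℝ) : ℝ) : ℂ) *
          (-(commCoeff 1 (fun m => I * ((m.1 : ℝ) : ℂ) * p m) (lamCoeff f) k)
            + commCoeff 0 (fun m => I * ((m.2 : ℝ) : ℂ) * p m) (lamCoeff f) k))
      = ∑' l, interaction f p k l := by
  rcases eq_or_ne k 0 with rfl | hk
  · simp [lamCoeff, interaction, sqgSymbol, cross]
  have hhalves : ((knorm k ^ (-(1 / 2) : ℝ) : ℝ) : ℂ) * ((knorm k ^ ((1 / 2) : ℝ) : ℝ) : ℂ)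
      = 1 := by
    rw [← ofReal_mul, ← Real.rpow_add (knorm_pos hk), neg_add_cancel, Real.rpow_zero, ofReal_one]
  rw [commCoeff_add_commCoeff hf hp, map_mul, conj_ofReal, mul_mul_mul_comm, hhalves, one_mul,
    conj_tsum, ← tsum_mul_left]
  refine tsum_congr fun l => ?_
  rw [interaction, ← lamCoeff_mul_commSymbol_mul_lamCoeff]
  have hreal := congrArg (starRingEnd ℂ) (lamCoeff_mul_commSymbol_mul_lamCoeff f k l)
  rw [conj_ofReal, ← lamCoeff_mul_commSymbol_mul_lamCoeff] at hreal
  simp only [map_mul, conj_lamCoeff] at hreal ⊢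
  linear_combination (starRingEnd ℂ) (p (k - l)) * hreal

/-- The change of variables `(m, k) ↦ (k, k - m)` grouping pairs of modes by their difference. -/
def differenceEquiv : Z2 × Z2 ≃ Z2 × Z2 where
  toFun q := (q.2, q.2 - q.1)
  invFun q := (q.1 - q.2, q.1)
  left_inv q := by simp
  right_inv q := by simp

section StationaryProfile

variable {ν γ : ℝ} {f : Z2 → ℝ} (hf : IsStationaryProfile ν γ f)

include hf

lemma IsStationaryProfile.abs_le_sqrt_knorm_mul_abs (k : Z2) : |f k| ≤ √(knorm k) * |f k| := by
  rcases eq_or_ne k 0 with rfl | hk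
  · simp [hf.apply_zero]
  · exact le_mul_of_one_le_left (abs_nonneg _) (Real.one_le_sqrt.2 (one_le_knorm hk))

lemma IsStationaryProfile.summable_abs : Summable fun k => |f k| :=
  hf.summable_sqrt.of_nonneg_of_le (fun _ => abs_nonneg _) hf.abs_le_sqrt_knorm_mul_abs

lemma IsStationaryProfile.tsum_interaction_sub (p : Z2 → ℂ) (m : Z2) :
    ∑' k, interaction f p k (k - m)
      = -2 * ν * (((knorm m ^ (-(1 / 2) : ℝ) : ℝ) : ℂ) * lamCoeff f m *
        (starRingEnd ℂ) (((knorm m ^ (γ + 1 / 2) : ℝ) : ℂ) * p m)) := by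
  have hterm : ∀ k, interaction f p k (k - m) = (2 * knorm m ^ 2 : ℝ) * (starRingEnd ℂ) (p m) *
      ((sqgSymbol k (m - k) * f k * f (m - k) : ℝ) : ℂ) := fun k => by
    rw [interaction, sub_sub_cancel, neg_sub, ← neg_sub m k, hf.apply_neg]
    push_cast
    ring
  simp only [hterm]
  rw [tsum_mul_left, ← ofReal_tsum, eq_neg_of_add_eq_zero_left (hf.equation m)]
  rcases eq_or_ne m 0 with rfl | hm
  · simp [lamCoeff, hf.apply_zero]
  have hpow : knorm m ^ 2 * knorm m ^ (γ - 1)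
      = knorm m ^ (-(1 / 2) : ℝ) * knorm m * knorm m ^ (γ + 1 / 2) := by
    have hm0 := knorm_pos hm
    rw [← Real.rpow_two, ← Real.rpow_add_one hm0.ne', ← Real.rpow_add hm0, ← Real.rpow_add hm0]
    ring_nf
  have hpow' := congrArg (fun x : ℝ => (x : ℂ)) hpow
  simp only [lamCoeff, map_mul, conj_ofReal]
  push_cast at hpow' ⊢
  linear_combination (-2 * ν * f m * (starRingEnd ℂ) (p m)) * hpow'

theorem IsStationaryProfile.isStatWeakSol : IsStatWeakSol ν γ (lamCoeff f) := by
  intro ψ hψ hper _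
  obtain ⟨C, hC⟩ := exists_knorm_sq_mul_norm_fCoeff_le (contDiff_infty.1 hψ 2) hper
  have hsum := summable_interaction hf.summable_sqrt hC
  have hregroup : ∑' k, ∑' l, interaction f (fCoeff ψ) k l
      = ∑' m, ∑' k, interaction f (fCoeff ψ) k (k - m) := by
    rw [← hsum.tsum_prod, ← differenceEquiv.tsum_eq]
    exact (differenceEquiv.summable_iff.2 hsum).tsum_prod
  simp only [lamCoeff_mul_conj_commCoeff hf.summable_abs hC]
  rw [hregroup]
  simp only [hf.tsum_interaction_sub]
  rw [tsum_mul_left]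
  ring

lemma IsStationaryProfile.summable_inv_knorm_mul_norm_sq :
    Summable fun k => (knorm k)⁻¹ * ‖lamCoeff f k‖ ^ 2 := by
  have hnn : ∀ k, 0 ≤ √(knorm k) * |f k| := fun k => by positivity
  have hsq : Summable fun k => √(knorm k) * |f k| * (√(knorm k) * |f k|) :=
    (hf.summable_sqrt.mul_right (∑' k, √(knorm k) * |f k|)).of_nonneg_of_le
      (fun k => mul_nonneg (hnn k) (hnn k)) fun k =>
        mul_le_mul_of_nonneg_left (hf.summable_sqrt.le_tsum k fun l _ => hnn l) (hnn k)
  refine hsq.congr fun k => ?_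
  rw [norm_lamCoeff, mul_mul_mul_comm, Real.mul_self_sqrt (knorm_nonneg k), mul_pow, sq, sq,
    ← mul_assoc (knorm k)⁻¹, ← mul_assoc (knorm k)⁻¹, inv_mul_mul_self]

lemma IsStationaryProfile.exists_holder_fCoeff_eq {α : ℝ} (hα0 : 0 ≤ α) (hα1 : α ≤ 1)
    (hfα : Summable fun k => knorm k ^ α * |f k|) :
    ∃ g : ℝ × ℝ → ℂ, Continuous g ∧ Periodic2 g ∧ RealValued g ∧
      (∃ C : ℝ, ∀ x y : ℝ × ℝ, ‖g x - g y‖ ≤ C * dist x y ^ α) ∧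
      ∀ k : Z2, fCoeff g k = if k = 0 then 0 else lamCoeff f k / ((knorm k : ℝ) : ℂ) := by
  have hnorm : ∀ k, ‖(f k : ℂ)‖ = |f k| := fun k => norm_real _
  have hc : Summable fun k => ‖(f k : ℂ)‖ := by simpa only [hnorm] using hf.summable_abs
  refine ⟨fourierSeries fun k => f k, continuous_fourierSeries hc, periodic2_fourierSeries,
    realValued_fourierSeries fun k => by rw [hf.apply_neg, conj_ofReal],
    ⟨_, norm_fourierSeries_sub_le hc hα0 hα1 (by simpa only [hnorm] using hfα)⟩, fun k => ?_⟩
  rw [fCoeff_fourierSeries hc]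
  split_ifs with hk
  · rw [hk, hf.apply_zero, ofReal_zero]
  · rw [lamCoeff, ofReal_mul, mul_div_cancel_left₀ _ (ofReal_ne_zero.2 (knorm_pos hk).ne')]

end StationaryProfile

lemma infinite_of_forall_exists_vanishing {ι R : Type*} [Zero R] {S : Set (ι → R)} (u : ι → ℝ)
    (hS : ∀ c ∈ S, c ≠ 0) (hvanish : ∀ M : ℝ, ∃ c ∈ S, ∀ k, u k < M → c k = 0) :
    S.Infinite := by
  intro hfin
  have := hfin.to_subtype
  choose κ hκ using fun c : S => Function.ne_iff.1 (hS c c.2)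
  obtain ⟨M, hM⟩ := (Set.finite_range fun c => u (κ c)).bddAbove
  obtain ⟨c, hc, hzero⟩ := hvanish (M + 1)
  exact hκ ⟨c, hc⟩ (hzero _ ((hM ⟨⟨c, hc⟩, rfl⟩).trans_lt (lt_add_one M)))

theorem stmt0_general (ν γ α : ℝ) (hγ : γ < 3 / 2) (hα0 : 0 ≤ α)
    (hα : α < 1 / 2 + min (1 / 6) (3 / 2 - γ)) :
    {c : Z2 → ℂ |
      c ≠ 0 ∧ c 0 = 0 ∧ (∀ k : Z2, c (-k) = (starRingEnd ℂ) (c k)) ∧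
      Summable (fun k : Z2 => (knorm k)⁻¹ * ‖c k‖ ^ 2) ∧
      IsStatWeakSol ν γ c ∧
      (∃ f : ℝ × ℝ → ℂ, Continuous f ∧ Periodic2 f ∧ RealValued f ∧
        (∃ Cf : ℝ, ∀ x y : ℝ × ℝ, ‖f x - f y‖ ≤ Cf * dist x y ^ α) ∧
        (∀ k : Z2, fCoeff f k = if k = 0 then 0 else c k / ((knorm k : ℝ) : ℂ)))}.Infinite := by
  have hα1 : α < 2 / 3 := by linarith [min_le_left (1 / 6) (3 / 2 - γ)]
  have hα2 : α < 2 - γ := by linarith [min_le_right (1 / 6) (3 / 2 - γ)]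
  obtain ⟨a, hlow, hhigh⟩ : ∃ a, max α (1 / 2) < a ∧ a < min (2 / 3) (2 - γ) :=
    exists_between (max_lt (lt_min hα1 hα2) (lt_min (by norm_num) (by linarith)))
  obtain ⟨hαa, ha⟩ := max_lt_iff.1 hlow
  obtain ⟨ha', haγ⟩ := lt_min_iff.1 hhigh
  refine infinite_of_forall_exists_vanishing knorm (fun c hc => hc.1) fun M => ?_
  obtain ⟨f, hf, ⟨k, hk⟩, hvanish, hsum⟩ := exists_isStationaryProfile ν ha ha' haγ M
  have hk0 : k ≠ 0 := fun h => hk (h ▸ hf.apply_zero)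
  have hne : lamCoeff f k ≠ 0 := ofReal_ne_zero.2 (mul_ne_zero (knorm_pos hk0).ne' hk)
  refine ⟨lamCoeff f, ⟨Function.ne_iff.2 ⟨k, hne⟩, by simp [lamCoeff], fun k => ?_,
    hf.summable_inv_knorm_mul_norm_sq, hf.isStatWeakSol,
    hf.exists_holder_fCoeff_eq hα0 (by linarith) (hsum α hαa)⟩, fun k hkM => ?_⟩
  · rw [conj_lamCoeff, lamCoeff, lamCoeff, knorm_neg, hf.apply_neg]
  · rw [lamCoeff, hvanish k hkM, mul_zero, ofReal_zero]

/-- Theorem 1.2: for every `ν ≥ 0`, `γ ∈ (0, 3/2)` and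
`1/2 ≤ α < 1/2 + min(1/6, 3/2 − γ)`, there exist infinitely many nontrivial stationary weak
solutions `θ` of SQG on `𝕋²` with zero mean and `Λ^{-1}θ ∈ C^α(𝕋²)`.  Solutions are encoded
by their Fourier coefficients `c = θ̂`; `Λ^{-1}θ ∈ C^α` is witnessed by a Hölder continuous
periodic function `f` with `f̂(k) = c(k)/|k|`. -/
theorem stmt0 (ν γ α : ℝ) (hν : 0 ≤ ν) (hγ1 : 0 < γ) (hγ2 : γ < 3 / 2)
    (hα1 : 1 / 2 ≤ α) (hα2 : α < 1 / 2 + min (1 / 6) (3 / 2 - γ)) :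
    {c : Z2 → ℂ |
      c ≠ 0 ∧ c 0 = 0 ∧ (∀ k : Z2, c (-k) = (starRingEnd ℂ) (c k)) ∧
      Summable (fun k : Z2 => (knorm k)⁻¹ * ‖c k‖ ^ 2) ∧
      IsStatWeakSol ν γ c ∧
      (∃ f : ℝ × ℝ → ℂ, Continuous f ∧ Periodic2 f ∧ RealValued f ∧
        (∃ Cf : ℝ, ∀ x y : ℝ × ℝ, ‖f x - f y‖ ≤ Cf * dist x y ^ α) ∧
        (∀ k : Z2, fCoeff f k = if k = 0 then 0 else c k / ((knorm k : ℝ) : ℂ)))}.Infinite :=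
  stmt0_general ν γ α hγ2 (one_half_pos.le.trans hα1) hα2

end
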